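/- arXiv:2009.06189 — 2 statements merged into one kernel-verified Lean document; each statement's English description precedes it below -/
import Mathlib

section
/- Suppose b is Diophantine with exponent r and θ is non-resonant with respect to b. Let E ∈ ℝ with L(E) > 0, and let u : ℤ → ℝ be a nonzero generalized eigenfunction, i.e. u_{n+1} + u_{n−1} + v(nb+θ)u_n = E u_n for all n ∈ ℤ and |u_n| ≤ C(1+|n|)^δ for some constants C, δ and all n. Then u decays exponentially: for every ε with 0 < ε < L(E)/3 there exists N such that |u_n| ≤ 2C(2|n|+1)^δ e^{−((L(E)−ε)/5)(|n|−1)} for all n with |n| > N; in particular u ∈ ℓ²(ℤ), so E is an eigenvalue of H_{α,θ,b} with exponentially decaying eigenfunction. -/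
open scoped Real

/-- The quasi-periodic potential `v(x) = 2λcos(2πx)/(1 - αcos(2πx))`. -/
noncomputable def potV (α lam : ℝ) (x : ℝ) : ℝ :=
  2 * lam * Real.cos (2 * Real.pi * x) / (1 - α * Real.cos (2 * Real.pi * x))

/-- One-step transfer matrix `A(x,z) = [[z - V x, -1],[1,0]]`. -/
noncomputable def tMat (V : ℝ → ℝ) (x : ℝ) (z : ℂ) : Matrix (Fin 2) (Fin 2) ℂ :=
  !![z - (V x : ℝ), -1; 1, 0]

/-- The `n`-step transfer matrix `A_n(x,z) = A(x+(n-1)b,z) ⋯ A(x+b,z) A(x,z)`. -/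
noncomputable def tProd (V : ℝ → ℝ) (b : ℝ) (n : ℕ) (x : ℝ) (z : ℂ) :
    Matrix (Fin 2) (Fin 2) ℂ :=
  (((List.range n).reverse).map (fun j => tMat V (x + (j : ℝ) * b) z)).prod

/-- The operator norm of a 2×2 complex matrix, acting on the Euclidean space `ℂ²`. -/
noncomputable def opNorm2 (M : Matrix (Fin 2) (Fin 2) ℂ) : ℝ :=
  ‖Matrix.toEuclideanCLM (𝕜 := ℂ) M‖

/-- The Lyapunov exponent `L(z) = lim_n (1/n)∫₀¹ log‖A_n(x,z)‖ dx`; the limit exists and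
equals `inf_{n ≥ 1} (1/n)∫₀¹ log‖A_n(x,z)‖ dx` by subadditivity, so we take that as the
definition. -/
noncomputable def lyap (V : ℝ → ℝ) (b : ℝ) (z : ℂ) : ℝ :=
  ⨅ n : ℕ+, ((n : ℝ))⁻¹ * ∫ x in (0:ℝ)..(1:ℝ), Real.log (opNorm2 (tProd V b n x z))

/-- `IsSchrodingerOp V b θ H` says that `H` is the bounded operator on `ℓ²(ℤ)` given by
`(Hu)ₙ = u_{n+1} + u_{n-1} + V(nb+θ)uₙ`. -/
def IsSchrodingerOp (V : ℝ → ℝ) (b θ : ℝ)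
    (H : lp (fun _ : ℤ => ℂ) 2 →L[ℂ] lp (fun _ : ℤ => ℂ) 2) : Prop :=
  ∀ u : lp (fun _ : ℤ => ℂ) 2, ∀ n : ℤ,
    (H u : ∀ _ : ℤ, ℂ) n = (u : ∀ _ : ℤ, ℂ) (n + 1) + (u : ∀ _ : ℤ, ℂ) (n - 1)
      + (V ((n : ℝ) * b + θ) : ℂ) * (u : ∀ _ : ℤ, ℂ) n

/-- `b` is Diophantine with exponent `r > 1`: there is `c > 0` with
`|sin(2πnb)| > c/|n|^r` for every nonzero integer `n`. -/
def DiophantineExp (b r : ℝ) : Prop :=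
  1 < r ∧ ∃ c > (0 : ℝ), ∀ n : ℤ, n ≠ 0 →
    c / |(n : ℝ)| ^ r < |Real.sin (2 * Real.pi * (n : ℝ) * b)|

/-- `θ` is non-resonant with respect to `b` (with Diophantine exponent `r`):
`|sin(2π(θ + nb/2))| < e^{-|n|^{1/(2r)}}` for at most finitely many `n ∈ ℤ`. -/
def NonResonant (b r θ : ℝ) : Prop :=
  {n : ℤ | |Real.sin (2 * Real.pi * (θ + (n : ℝ) * b / 2))|
      < Real.exp (-(|(n : ℝ)| ^ (1 / (2 * r))))}.Finite

/-!
The argument is Jitomirskaya's non-perturbative localization. The entries of the `k`-step transfer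
matrix are determinants of `E - H` restricted to boxes. Multiplied by the denominators of the
potential and recentred at the middle of the box, such a determinant is a polynomial of degree at
most `k` in the cosine of the phase.

By subadditivity and unique ergodicity of the rotation, a box determinant of length `k` is at most
`exp (k (L + ε))` up to a constant, uniformly in the phase; conversely, since `L` is the infimum of
the averages of `log ‖A_k‖ / k`, some phase makes a determinant of size `exp (k L)`. Lagrange
interpolation at `k + 1` nodes then finds a determinant of size `exp (k (L - ε))` among the nodes,
provided that they are evenly spread: differences of phases are controlled by the Diophantine
condition on `b`, sums by the non-resonance of `θ`.

Take `k ≈ 6g` and `n ≈ 4g`, and for nodes the left endpoints of the windows of length `k` that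
contain either a fixed `y` with `u y ≠ 0` or `n`, at distance at least `g` from their boundary. By
Green's formula a large determinant makes `u` of size `exp (-(L - ε) g)` that far inside its window.
For large `n` the window cannot be one around `y`, so `u n` decays at every rate below `L / 4`;
reflecting `ℤ` handles `n → -∞`.
-/

theorem norm_geom_sum_le {K : Type*} [NormedField K] {z : K} (hz : ‖z‖ = 1) (hz1 : z ≠ 1) (N : ℕ) :
    ‖∑ j ∈ Finset.range N, z ^ j‖ ≤ 2 / ‖z - 1‖ := by
  rw [geom_sum_eq hz1, norm_div]
  gcongr
  calc ‖z ^ N - 1‖ ≤ ‖z ^ N‖ + ‖(1 : K)‖ := norm_sub_le _ _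
    _ = 2 := by rw [norm_pow, hz, one_pow, norm_one, one_add_one_eq_two]

/-- The deviation of the Birkhoff sum of `f` along `N` steps of the rotation by `a`, started at
`x`, from `N` times the mean of `f`. -/
noncomputable def birkhoffError (a : UnitAddCircle) (f : C(UnitAddCircle, ℂ)) (N : ℕ)
    (x : UnitAddCircle) : ℂ :=
  ∑ j ∈ Finset.range N, f (x + j • a) - N * ∫ y, f y ∂AddCircle.haarAddCircle

theorem birkhoffError_add (a : UnitAddCircle) (f g : C(UnitAddCircle, ℂ)) (N : ℕ)
    (x : UnitAddCircle) :
    birkhoffError a (f + g) N x = birkhoffError a f N x + birkhoffError a g N x := by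
  have hintegrable : ∀ h : C(UnitAddCircle, ℂ),
      MeasureTheory.Integrable h AddCircle.haarAddCircle := fun h =>
    h.continuous.integrable_of_hasCompactSupport (.of_compactSpace _)
  simp only [birkhoffError, ContinuousMap.add_apply, Finset.sum_add_distrib,
    MeasureTheory.integral_add (hintegrable f) (hintegrable g)]
  ring

theorem birkhoffError_smul (a : UnitAddCircle) (c : ℂ) (f : C(UnitAddCircle, ℂ)) (N : ℕ)
    (x : UnitAddCircle) : birkhoffError a (c • f) N x = c * birkhoffError a f N x := by
  simp only [birkhoffError, ContinuousMap.smul_apply, smul_eq_mul,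
    MeasureTheory.integral_const_mul, ← Finset.mul_sum]
  ring

theorem norm_birkhoffError_le (a : UnitAddCircle) (f : C(UnitAddCircle, ℂ)) (N : ℕ)
    (x : UnitAddCircle) : ‖birkhoffError a f N x‖ ≤ 2 * N * ‖f‖ := by
  have hsum : ‖∑ j ∈ Finset.range N, f (x + j • a)‖ ≤ N * ‖f‖ := by
    simpa using norm_sum_le_of_le (Finset.range N) fun j _ => f.norm_coe_le_norm (x + j • a)
  have hintegral : ‖∫ y, f y ∂(AddCircle.haarAddCircle (T := 1))‖ ≤ ‖f‖ := by
    simpa using MeasureTheory.norm_integral_le_of_norm_le_const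
      (μ := AddCircle.haarAddCircle (T := 1)) (.of_forall f.norm_coe_le_norm)
  calc ‖birkhoffError a f N x‖
      ≤ ‖∑ j ∈ Finset.range N, f (x + j • a)‖ +
        ‖(N : ℂ) * ∫ y, f y ∂(AddCircle.haarAddCircle (T := 1))‖ := norm_sub_le _ _
    _ ≤ N * ‖f‖ + N * ‖f‖ := by
        rw [norm_mul, RCLike.norm_natCast]
        gcongr
    _ = 2 * N * ‖f‖ := by ring

theorem norm_birkhoffError_fourier_le {a : UnitAddCircle} {n : ℤ} (hn : n ≠ 0)
    (ha : n • a ≠ 0) (N : ℕ) (x : UnitAddCircle) :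
    ‖birkhoffError a (fourier n) N x‖ ≤ 2 / ‖fourier n a - 1‖ := by
  have hintegral : ∫ y, fourier n y ∂(AddCircle.haarAddCircle (T := 1)) = 0 := by
    have hcoeff := congrFun (fourierCoeff_fourier (T := 1) n) 0
    simpa only [Pi.single_eq_of_ne hn.symm, fourierCoeff, neg_zero, fourier_zero, one_smul]
      using hcoeff
  have hgeom : ∀ j : ℕ, fourier n (x + j • a) = fourier n x * fourier n a ^ j := fun j => by
    simp only [fourier_apply, smul_add, smul_comm n j a, AddCircle.toCircle_add,
      AddCircle.toCircle_nsmul, Circle.coe_mul, Circle.coe_pow]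
  have hne : fourier n a ≠ 1 := fun h => ha <| AddCircle.injective_toCircle one_ne_zero <|
    Circle.coe_injective <| by simpa [fourier_apply] using h
  rw [birkhoffError, hintegral, mul_zero, sub_zero, Finset.sum_congr rfl fun j _ => hgeom j,
    ← Finset.mul_sum, norm_mul, fourier_apply, Circle.norm_coe, one_mul]
  exact norm_geom_sum_le (Circle.norm_coe _) hne N

theorem exists_norm_birkhoffError_le_of_mem_span {a : UnitAddCircle} (ha : ¬IsOfFinAddOrder a)
    {g : C(UnitAddCircle, ℂ)} (hg : g ∈ Submodule.span ℂ (Set.range (@fourier 1))) :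
    ∃ C : ℝ, ∀ N x, ‖birkhoffError a g N x‖ ≤ C := by
  induction hg using Submodule.span_induction with
  | mem g hg =>
    obtain ⟨n, rfl⟩ := hg
    rcases eq_or_ne n 0 with rfl | hn
    · exact ⟨0, fun N x => by simp [birkhoffError]⟩
    · exact ⟨_, norm_birkhoffError_fourier_le hn fun h =>
        ha (isOfFinAddOrder_iff_zsmul_eq_zero.mpr ⟨n, hn, h⟩)⟩
  | zero => exact ⟨0, fun N x => by simp [birkhoffError]⟩
  | add g h _ _ ihg ihh =>
    obtain ⟨C, hC⟩ := ihg
    obtain ⟨D, hD⟩ := ihh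
    refine ⟨C + D, fun N x => ?_⟩
    rw [birkhoffError_add]
    exact norm_add_le_of_le (hC N x) (hD N x)
  | smul c g _ ih =>
    obtain ⟨C, hC⟩ := ih
    refine ⟨‖c‖ * C, fun N x => ?_⟩
    rw [birkhoffError_smul, norm_mul]
    gcongr
    exact hC N x

theorem exists_norm_birkhoffError_le {a : UnitAddCircle} (ha : ¬IsOfFinAddOrder a)
    (f : C(UnitAddCircle, ℂ)) {ε : ℝ} (hε : 0 < ε) :
    ∃ C : ℝ, ∀ N x, ‖birkhoffError a f N x‖ ≤ ε * N + C := by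
  have hdense : f ∈ closure (Submodule.span ℂ (Set.range (@fourier 1)) : Set _) := by
    rw [← Submodule.topologicalClosure_coe, span_fourier_closure_eq_top]
    trivial
  obtain ⟨g, hg, hfg⟩ := Metric.mem_closure_iff.mp hdense (ε / 2) (half_pos hε)
  obtain ⟨C, hC⟩ := exists_norm_birkhoffError_le_of_mem_span ha hg
  refine ⟨C, fun N x => ?_⟩
  calc ‖birkhoffError a f N x‖ = ‖birkhoffError a (f - g) N x + birkhoffError a g N x‖ := by
        rw [← birkhoffError_add, sub_add_cancel]
    _ ≤ 2 * N * (ε / 2) + C := by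
        refine norm_add_le_of_le ((norm_birkhoffError_le a _ N x).trans ?_) (hC N x)
        gcongr
        rw [← dist_eq_norm]
        exact hfg.le
    _ = ε * N + C := by ring

section Equidistribution

variable {b : ℝ} {f : ℝ → ℝ}

theorem exists_abs_birkhoffSum_sub_le (hb : Irrational b) (hf : Continuous f)
    (hper : Function.Periodic f 1) {ε : ℝ} (hε : 0 < ε) :
    ∃ C : ℝ, ∀ (N : ℕ) (x : ℝ),
      |∑ j ∈ Finset.range N, f (x + j * b) - N * ∫ y in (0 : ℝ)..1, f y| ≤ ε * N + C := by
  have hperc : Function.Periodic (fun x => (f x : ℂ)) 1 := fun x => by simp only [hper x]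
  let F : C(UnitAddCircle, ℂ) :=
    ⟨hperc.lift, continuous_coinduced_dom.mpr (Complex.continuous_ofReal.comp hf)⟩
  have hF : ∀ x : ℝ, F x = f x := fun x => hperc.lift_coe x
  have hb' : ¬IsOfFinAddOrder (b : UnitAddCircle) := by
    rw [AddCircle.not_isOfFinAddOrder_iff_forall_rat_ne_div]
    exact fun q hq => hb ⟨q, by rw [hq, div_one]⟩
  have hmean : ∫ y, F y ∂(AddCircle.haarAddCircle (T := 1)) = (∫ y in (0 : ℝ)..1, f y : ℝ) := by
    rw [AddCircle.integral_haarAddCircle, inv_one, one_smul,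
      ← UnitAddCircle.intervalIntegral_preimage 0 F, zero_add, ← intervalIntegral.integral_ofReal]
    simp only [hF]
  obtain ⟨C, hC⟩ := exists_norm_birkhoffError_le hb' F hε
  refine ⟨C, fun N x => ?_⟩
  have hcast : birkhoffError b F N x =
      (∑ j ∈ Finset.range N, f (x + j * b) - N * ∫ y in (0 : ℝ)..1, f y : ℝ) := by
    have horbit : ∀ j : ℕ, F ((x : UnitAddCircle) + j • (b : UnitAddCircle)) = f (x + j * b) :=
      fun j => by rw [← AddCircle.coe_nsmul, ← AddCircle.coe_add, hF, nsmul_eq_mul]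
    rw [birkhoffError, hmean, Finset.sum_congr rfl fun j _ => horbit j]
    push_cast
    rfl
  simpa only [hcast, Complex.norm_real, Real.norm_eq_abs] using hC N x

theorem exists_birkhoffSum_le_birkhoffSum_add (hb : Irrational b) (hf : Continuous f)
    (hper : Function.Periodic f 1) {ε : ℝ} (hε : 0 < ε) :
    ∃ C : ℝ, ∀ (p q : ℤ) (x y : ℝ), p ≤ q →
      ∑ j ∈ Finset.Ico p q, f (x + j * b) ≤
        ∑ j ∈ Finset.Ico p q, f (y + j * b) + (ε * (q - p) + C) := by
  obtain ⟨C, hC⟩ := exists_abs_birkhoffSum_sub_le hb hf hper (half_pos hε)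
  refine ⟨2 * C, fun p q x y hpq => ?_⟩
  obtain ⟨N, hN⟩ := Int.eq_ofNat_of_zero_le (sub_nonneg.mpr hpq)
  have hshift : ∀ x : ℝ, ∑ j ∈ Finset.Ico p q, f (x + j * b) =
      ∑ j ∈ Finset.range N, f (x + p * b + j * b) := fun x => by
    rw [Int.Ico_eq_finset_map, hN, Int.toNat_natCast, Finset.sum_map]
    refine Finset.sum_congr rfl fun j _ => congrArg f ?_
    simp only [Function.Embedding.trans_apply, Nat.castEmbedding_apply, addLeftEmbedding_apply]
    push_cast
    ring
  have hcast : (q - p : ℝ) = N := by exact_mod_cast hN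
  rw [hshift, hshift, hcast]
  linarith [abs_le.mp (hC N (x + p * b)), abs_le.mp (hC N (y + p * b))]

end Equidistribution

/-- Subadditivity of `f` over the rotation by `b`. The logarithms of the norms of the transfer
matrix products are of this kind. -/
def IsSubadditiveCocycle (b : ℝ) (f : ℕ → ℝ → ℝ) : Prop :=
  ∀ (m n : ℕ) (x : ℝ), f (m + n) x ≤ f m x + f n (x + m * b)

section Furman

variable {b : ℝ} {f : ℕ → ℝ → ℝ}

theorem IsSubadditiveCocycle.le_sum_add (hf : IsSubadditiveCocycle b f) (m s q : ℕ) (x : ℝ) :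
    f (q * m + s) x ≤
      ∑ j ∈ Finset.range q, f m (x + j * (m * b)) + f s (x + q * (m * b)) := by
  induction q generalizing x with
  | zero => simp
  | succ q ih =>
    have hshift : ∀ t : ℝ, x + m * b + t * (m * b) = x + (t + 1) * (m * b) := fun t => by ring
    calc f ((q + 1) * m + s) x = f (m + (q * m + s)) x := by ring_nf
      _ ≤ f m x + f (q * m + s) (x + m * b) := hf m (q * m + s) x
      _ ≤ f m x + (∑ j ∈ Finset.range q, f m (x + m * b + j * (m * b)) +
            f s (x + m * b + q * (m * b))) := by gcongr; exact ih _
      _ = _ := by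
        simp only [Finset.sum_range_succ', hshift, Nat.cast_add, Nat.cast_one, Nat.cast_zero,
          zero_mul, add_zero]
        ring

theorem IsSubadditiveCocycle.exists_le (hf : IsSubadditiveCocycle b f) (hb : Irrational b)
    (hcont : ∀ n, Continuous (f n)) (hper : ∀ n, Function.Periodic (f n) 1) {m : ℕ} (hm : m ≠ 0)
    {ε : ℝ} (hε : 0 < ε) :
    ∃ C : ℝ, ∀ n x, f n x ≤ n * ((m : ℝ)⁻¹ * (∫ y in (0 : ℝ)..1, f m y) + ε) + C := by
  obtain ⟨C, hC⟩ := exists_abs_birkhoffSum_sub_le (hb.natCast_mul hm) (hcont m) (hper m)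
    (show 0 < m * ε by positivity)
  have hbdd : ∀ s, ∃ D, ∀ x, f s x ≤ D := fun s =>
    let ⟨D, hD⟩ := ((hper s).isBounded_of_continuous one_ne_zero (hcont s)).bddAbove
    ⟨D, fun x => hD (Set.mem_range_self x)⟩
  choose D hD using hbdd
  obtain ⟨M, hM⟩ := ((Finset.range m).image D).exists_le
  set a := (m : ℝ)⁻¹ * (∫ y in (0 : ℝ)..1, f m y) + ε with ha
  refine ⟨m * |a| + C + M, fun n x => ?_⟩
  have hn : n / m * m + n % m = n := Nat.div_add_mod' n m
  have hn' : ((n / m : ℕ) : ℝ) * m + (n % m : ℕ) = n := by exact_mod_cast hn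
  have hlt : n % m < m := Nat.mod_lt _ (Nat.pos_of_ne_zero hm)
  have hblocks : ∑ j ∈ Finset.range (n / m), f m (x + j * (m * b)) ≤
      (n / m : ℕ) * m * a + C := by
    have hma : m * a = (∫ y in (0 : ℝ)..1, f m y) + m * ε := by rw [ha]; field_simp
    rw [mul_assoc, hma]
    linarith [(abs_le.mp (hC (n / m) x)).2]
  have hrest : f (n % m) (x + (n / m : ℕ) * (m * b)) ≤ M :=
    (hD _ _).trans (hM _ (Finset.mem_image_of_mem D (Finset.mem_range.mpr hlt)))
  have hmod : -((n % m : ℕ) * a) ≤ m * |a| :=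
    calc -((n % m : ℕ) * a) ≤ |(n % m : ℕ) * a| := neg_le_abs _
      _ = (n % m : ℕ) * |a| := by rw [abs_mul, Nat.abs_cast]
      _ ≤ m * |a| := by gcongr
  calc f n x = f (n / m * m + n % m) x := by rw [hn]
    _ ≤ (n / m : ℕ) * m * a + C + M := (hf.le_sum_add m (n % m) (n / m) x).trans (by gcongr)
    _ = n * a - (n % m : ℕ) * a + C + M := by rw [← hn']; ring
    _ ≤ n * a + (m * |a| + C + M) := by linarith

end Furman

section TransferMatrix

theorem opNorm2_mul_le (M N : Matrix (Fin 2) (Fin 2) ℂ) :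
    opNorm2 (M * N) ≤ opNorm2 M * opNorm2 N := by
  rw [opNorm2, map_mul]
  exact norm_mul_le _ _

theorem opNorm2_pos {M : Matrix (Fin 2) (Fin 2) ℂ} : 0 < opNorm2 M ↔ M ≠ 0 := by
  rw [opNorm2, norm_pos_iff, Ne, map_eq_zero_iff _ (EquivLike.injective _)]

theorem continuous_opNorm2 : Continuous opNorm2 :=
  continuous_norm.comp <| LinearMap.continuous_of_finiteDimensional
    (Matrix.toEuclideanCLM (𝕜 := ℂ) (n := Fin 2)).toAlgEquiv.toLinearMap

theorem norm_apply_le_opNorm2 (M : Matrix (Fin 2) (Fin 2) ℂ) (i j : Fin 2) :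
    ‖M i j‖ ≤ opNorm2 M :=
  calc ‖M i j‖ = ‖Matrix.toEuclideanCLM (𝕜 := ℂ) M (EuclideanSpace.single j 1) i‖ := by
        simp [Matrix.ofLp_toEuclideanCLM]
    _ ≤ ‖Matrix.toEuclideanCLM (𝕜 := ℂ) M (EuclideanSpace.single j 1)‖ := PiLp.norm_apply_le _ i
    _ ≤ opNorm2 M := by
        simpa [opNorm2] using
          (Matrix.toEuclideanCLM (𝕜 := ℂ) M).le_opNorm (EuclideanSpace.single j 1)

theorem opNorm2_le_sum (M : Matrix (Fin 2) (Fin 2) ℂ) :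
    opNorm2 M ≤ ∑ i, ∑ j, ‖M i j‖ * opNorm2 (Matrix.single i j 1) := by
  conv_lhs => rw [opNorm2, Matrix.matrix_eq_sum_single M, map_sum]
  refine norm_sum_le_of_le _ fun i _ => ?_
  rw [map_sum]
  refine norm_sum_le_of_le _ fun j _ => ?_
  rw [← mul_one (M i j), ← smul_eq_mul, ← Matrix.smul_single, map_smul, norm_smul, smul_eq_mul,
    mul_one, opNorm2]

theorem exists_mul_opNorm2_le_norm_apply :
    ∃ c > 0, ∀ M : Matrix (Fin 2) (Fin 2) ℂ, ∃ i j, c * opNorm2 M ≤ ‖M i j‖ := by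
  set S := ∑ i : Fin 2, ∑ j : Fin 2, opNorm2 (Matrix.single i j 1) with hS
  have hS0 : 0 ≤ S := Finset.sum_nonneg fun i _ => Finset.sum_nonneg fun j _ => norm_nonneg _
  have hS1 : 0 < S + 1 := by linarith
  refine ⟨(S + 1)⁻¹, inv_pos.mpr hS1, fun M => ?_⟩
  rcases eq_or_ne M 0 with rfl | hM
  · exact ⟨0, 0, by simp [opNorm2]⟩
  by_contra! hlt
  have hpos := opNorm2_pos.mpr hM
  refine lt_irrefl (opNorm2 M) ?_
  calc opNorm2 M ≤ ∑ i, ∑ j, ‖M i j‖ * opNorm2 (Matrix.single i j 1) := opNorm2_le_sum M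
    _ ≤ ∑ i, ∑ j, (S + 1)⁻¹ * opNorm2 M * opNorm2 (Matrix.single i j 1) := by
        gcongr with i _ j
        · exact norm_nonneg _
        · exact (hlt i j).le
    _ = S / (S + 1) * opNorm2 M := by
        simp only [← Finset.mul_sum, ← hS]
        ring
    _ < opNorm2 M :=
        mul_lt_of_lt_one_left hpos ((div_lt_one hS1).mpr (lt_add_one S))

variable (V : ℝ → ℝ) (b E : ℝ)

theorem tProd_zero (x : ℝ) (z : ℂ) : tProd V b 0 x z = 1 := by
  simp [tProd]

theorem tProd_succ (n : ℕ) (x : ℝ) (z : ℂ) :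
    tProd V b (n + 1) x z = tMat V (x + n * b) z * tProd V b n x z := by
  simp [tProd, List.range_succ]

theorem tProd_add (n m : ℕ) (x : ℝ) (z : ℂ) :
    tProd V b (n + m) x z = tProd V b n (x + m * b) z * tProd V b m x z := by
  induction n with
  | zero => rw [zero_add, tProd_zero, one_mul]
  | succ n ih =>
    rw [Nat.add_right_comm, tProd_succ, ih, tProd_succ, mul_assoc, Nat.cast_add, add_mul,
      add_right_comm, add_assoc]

theorem det_tProd (n : ℕ) (x : ℝ) (z : ℂ) : (tProd V b n x z).det = 1 := by
  induction n with
  | zero => rw [tProd_zero, Matrix.det_one]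
  | succ n ih => rw [tProd_succ, Matrix.det_mul, ih, mul_one, tMat]; simp

theorem opNorm2_tProd_pos (n : ℕ) (x : ℝ) (z : ℂ) : 0 < opNorm2 (tProd V b n x z) :=
  opNorm2_pos.mpr fun h => by simpa [h] using det_tProd V b n x z

variable {V}

theorem continuous_tProd (hV : Continuous V) (n : ℕ) (z : ℂ) :
    Continuous fun x => tProd V b n x z := by
  induction n with
  | zero => simpa only [tProd_zero] using continuous_const
  | succ n ih =>
    simp only [tProd_succ]
    refine Continuous.matrix_mul ?_ ih
    unfold tMat
    fun_prop

theorem continuous_log_opNorm2_tProd (hV : Continuous V) (n : ℕ) (z : ℂ) :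
    Continuous fun x => Real.log (opNorm2 (tProd V b n x z)) :=
  (continuous_opNorm2.comp (continuous_tProd b hV n z)).log
    fun x => (opNorm2_tProd_pos V b n x z).ne'

theorem periodic_tProd (hV : Function.Periodic V 1) (n : ℕ) (z : ℂ) :
    Function.Periodic (fun x => tProd V b n x z) 1 := fun x => by
  simp only [tProd, tMat, add_right_comm x 1, hV _]

theorem isSubadditiveCocycle_log_opNorm2_tProd (V : ℝ → ℝ) (z : ℂ) :
    IsSubadditiveCocycle b fun n x => Real.log (opNorm2 (tProd V b n x z)) := fun m n x => by
  have hpos := fun n x => opNorm2_tProd_pos V b n x z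
  rw [← Real.log_mul (hpos m x).ne' (hpos n _).ne', mul_comm]
  refine Real.log_le_log (hpos _ x) ?_
  rw [add_comm m, tProd_add]
  exact opNorm2_mul_le _ _

variable {b}

theorem exists_log_opNorm2_tProd_le (hb : Irrational b) (hV : Continuous V)
    (hper : Function.Periodic V 1) (z : ℂ) {ε : ℝ} (hε : 0 < ε) :
    ∃ C : ℝ, ∀ (n : ℕ) (x : ℝ),
      Real.log (opNorm2 (tProd V b n x z)) ≤ n * (lyap V b z + ε) + C := by
  obtain ⟨m, hm⟩ := exists_lt_of_ciInf_lt (show lyap V b z < lyap V b z + ε / 2 by linarith)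
  obtain ⟨C, hC⟩ := (isSubadditiveCocycle_log_opNorm2_tProd b V z).exists_le hb
    (continuous_log_opNorm2_tProd b hV · z)
    (fun n => (periodic_tProd b hper n z).comp fun M => Real.log (opNorm2 M))
    m.ne_zero (half_pos hε)
  refine ⟨C, fun n x => (hC n x).trans ?_⟩
  have hle : (m : ℝ)⁻¹ * (∫ y in (0 : ℝ)..1, Real.log (opNorm2 (tProd V b m y z))) + ε / 2 ≤
      lyap V b z + ε := by linarith
  gcongr

end TransferMatrix

/-- The determinant of `E - H` restricted to a box of `n` sites whose leftmost phase is `x`. The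
index `n = 0` is the empty determinant. -/
noncomputable def boxDet (V : ℝ → ℝ) (b E : ℝ) : ℕ → ℝ → ℝ
  | 0, _ => 1
  | 1, x => E - V x
  | n + 2, x => (E - V (x + (n + 1) * b)) * boxDet V b E (n + 1) x - boxDet V b E n x

section BoxDet

variable (V : ℝ → ℝ) (b E : ℝ)

theorem tProd_add_two (n : ℕ) (x : ℝ) : tProd V b (n + 2) x E =
    !![(boxDet V b E (n + 2) x : ℂ), -boxDet V b E (n + 1) (x + b);
      boxDet V b E (n + 1) x, -boxDet V b E n (x + b)] := by
  induction n with
  | zero => simp [tProd_succ, tProd_zero, tMat, boxDet, Matrix.one_fin_two, sub_eq_add_neg]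
  | succ n ih =>
    have hphase : x + ((n + 2 : ℕ) : ℝ) * b = x + b + (n + 1) * b := by push_cast; ring
    have hphase' : x + ((n + 1 : ℕ) + 1) * b = x + b + (n + 1) * b := by push_cast; ring
    rw [tProd_succ, ih, hphase, tMat, Matrix.mul_fin_two]
    simp only [boxDet, hphase']
    push_cast
    congr! 3 <;> ring_nf

theorem abs_boxDet_le_opNorm2 (n : ℕ) (x : ℝ) :
    |boxDet V b E n x| ≤ opNorm2 (tProd V b n x E) := by
  rw [← Real.norm_eq_abs, ← Complex.norm_real]
  refine le_of_eq_of_le (congrArg norm ?_) (norm_apply_le_opNorm2 _ 0 0)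
  match n with
  | 0 => simp [boxDet, tProd_zero]
  | 1 => simp [boxDet, tProd_succ, tProd_zero, tMat]
  | n + 2 => simp [tProd_add_two]

variable {V b} {E}

theorem exists_abs_boxDet_le (hb : Irrational b) (hV : Continuous V)
    (hper : Function.Periodic V 1) {ε : ℝ} (hε : 0 < ε) :
    ∃ C : ℝ, ∀ (n : ℕ) (x : ℝ),
      |boxDet V b E n x| ≤ Real.exp (n * (lyap V b E + ε) + C) := by
  obtain ⟨C, hC⟩ := exists_log_opNorm2_tProd_le hb hV hper E hε
  exact ⟨C, fun n x => (abs_boxDet_le_opNorm2 V b E n x).trans <|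
    (Real.log_le_iff_le_exp (opNorm2_tProd_pos V b n x E)).mp (hC n x)⟩

theorem exists_mul_lyap_le_log_opNorm2_tProd (hV : Continuous V) {z : ℂ} (hL : 0 < lyap V b z)
    {n : ℕ} (hn : n ≠ 0) :
    ∃ x, n * lyap V b z ≤ Real.log (opNorm2 (tProd V b n x z)) := by
  by_contra! hlt
  have hbdd : BddBelow (Set.range fun n : ℕ+ => (n : ℝ)⁻¹ *
      ∫ x in (0 : ℝ)..1, Real.log (opNorm2 (tProd V b n x z))) := by
    by_contra h
    exact hL.ne' (Real.sInf_of_not_bddBelow h)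
  have hle : lyap V b z ≤ (n : ℝ)⁻¹ * ∫ x in (0 : ℝ)..1, Real.log (opNorm2 (tProd V b n x z)) :=
    ciInf_le hbdd ⟨n, Nat.pos_of_ne_zero hn⟩
  rw [le_inv_mul_iff₀ (by positivity)] at hle
  have hlt' : ∫ x in (0 : ℝ)..1, Real.log (opNorm2 (tProd V b n x z)) <
      ∫ _ in (0 : ℝ)..1, n * lyap V b z :=
    intervalIntegral.integral_lt_integral_of_continuousOn_of_le_of_exists_lt zero_lt_one
      (continuous_log_opNorm2_tProd b hV n z).continuousOn continuousOn_const
      (fun x _ => (hlt x).le) ⟨0, ⟨le_rfl, zero_le_one⟩, hlt 0⟩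
  rw [intervalIntegral.integral_const, sub_zero, one_smul] at hlt'
  exact hlt'.not_ge hle

theorem exists_le_abs_boxDet (hV : Continuous V) (hL : 0 < lyap V b E) :
    ∃ c > 0, ∀ m : ℕ, ∃ n ∈ Set.Icc m (m + 2), ∃ x,
      c * Real.exp (n * lyap V b E) ≤ |boxDet V b E n x| := by
  obtain ⟨c, hc, hentry⟩ := exists_mul_opNorm2_le_norm_apply
  refine ⟨c, hc, fun m => ?_⟩
  obtain ⟨x, hx⟩ := exists_mul_lyap_le_log_opNorm2_tProd hV hL (m + 1).succ_ne_zero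
  rw [Real.le_log_iff_exp_le (opNorm2_tProd_pos ..)] at hx
  suffices ∃ n ∈ Set.Icc m (m + 2), ∃ y,
      c * opNorm2 (tProd V b (m + 2) x E) ≤ |boxDet V b E n y| by
    obtain ⟨n, hn, y, hy⟩ := this
    refine ⟨n, hn, y, le_trans ?_ hy⟩
    gcongr
    refine le_trans ?_ hx
    gcongr
    exact_mod_cast hn.2
  obtain ⟨i, j, hij⟩ := hentry (tProd V b (m + 2) x E)
  nth_rw 2 [tProd_add_two] at hij
  fin_cases i <;> fin_cases j <;>
    simp only [Fin.zero_eta, Fin.mk_one, Matrix.of_apply, Matrix.cons_val', Matrix.cons_val_zero,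
      Matrix.cons_val_one, Matrix.cons_val_fin_one, norm_neg, Complex.norm_real,
      Real.norm_eq_abs] at hij
  exacts [⟨m + 2, by simp, x, hij⟩, ⟨m + 1, by simp, x + b, hij⟩, ⟨m + 1, by simp, x, hij⟩,
    ⟨m, by simp, x + b, hij⟩]

end BoxDet

/-- `u` solves the eigenvalue equation `Hu = Eu` on `ℤ`, with no condition at infinity. -/
def IsFormalEigenfunction (V : ℝ → ℝ) (b θ E : ℝ) (u : ℤ → ℝ) : Prop :=
  ∀ n : ℤ, u (n + 1) + u (n - 1) + V (n * b + θ) * u n = E * u n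

section Green

variable {V : ℝ → ℝ} {b θ E : ℝ} {u : ℤ → ℝ}

theorem IsFormalEigenfunction.apply_add_one (hu : IsFormalEigenfunction V b θ E u) (n : ℤ) :
    u (n + 1) = (E - V (θ + n * b)) * u n - u (n - 1) := by
  rw [add_comm θ]
  linarith [hu n]

theorem IsFormalEigenfunction.boxDet_succ_mul (hu : IsFormalEigenfunction V b θ E u) (a : ℤ)
    (l : ℕ) :
    boxDet V b E (l + 1) (θ + a * b) * u (a + l) =
      u (a - 1) + boxDet V b E l (θ + a * b) * u (a + l + 1) := by
  induction l with
  | zero => simp [boxDet, hu.apply_add_one]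
  | succ l ih =>
    have hphase : θ + a * b + (l + 1) * b = θ + (a + l + 1 : ℤ) * b := by push_cast; ring
    have hrec := hu.apply_add_one (a + l + 1)
    rw [add_sub_cancel_right] at hrec
    rw [Nat.cast_succ, ← add_assoc, hrec, boxDet, hphase]
    linear_combination ih

theorem IsFormalEigenfunction.green (hu : IsFormalEigenfunction V b θ E u) (a : ℤ) (l m : ℕ) :
    boxDet V b E (l + 1 + m) (θ + a * b) * u (a + l) =
      boxDet V b E m (θ + (a + l + 1 : ℤ) * b) * u (a - 1) +
        boxDet V b E l (θ + a * b) * u (a + l + 1 + m) := by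
  induction m using Nat.twoStepInduction with
  | zero => simpa [boxDet] using hu.boxDet_succ_mul a l
  | one =>
    have hphase : θ + a * b + (l + 1) * b = θ + (a + l + 1 : ℤ) * b := by push_cast; ring
    have hrec := hu.apply_add_one (a + l + 1)
    rw [add_sub_cancel_right] at hrec
    rw [Nat.cast_one, hrec, boxDet, boxDet, hphase]
    linear_combination (E - V (θ + (a + l + 1 : ℤ) * b)) * hu.boxDet_succ_mul a l
  | more m ih ih' =>
    have hphase : θ + a * b + ((l + 1 + m : ℕ) + 1) * b =
        θ + (a + l + 1 + m + 1 : ℤ) * b := by push_cast; ring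
    have hphase' : θ + (a + l + 1 : ℤ) * b + (m + 1) * b =
        θ + (a + l + 1 + m + 1 : ℤ) * b := by push_cast; ring
    have hrec := hu.apply_add_one (a + l + 1 + m + 1)
    rw [add_sub_cancel_right] at hrec
    rw [Nat.cast_succ, ← add_assoc (a + l + 1 : ℤ)] at ih'
    have hindex : (a + l + 1 + (m + 2 : ℕ) : ℤ) = a + l + 1 + m + 1 + 1 := by push_cast; ring
    rw [hindex, hrec, ← add_assoc, boxDet, boxDet, hphase, hphase']
    linear_combination (E - V (θ + (a + l + 1 + m + 1 : ℤ) * b)) * ih' - ih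

theorem IsFormalEigenfunction.abs_boxDet_mul_le (hu : IsFormalEigenfunction V b θ E u)
    {Λ A B : ℝ} (hΛ : 0 ≤ Λ) (hdet : ∀ l x, |boxDet V b E l x| ≤ Real.exp (l * Λ + A))
    {j p : ℤ} {k g : ℕ} (hg : g ≠ 0) (hjp : j + g ≤ p + 1) (hpk : p + g ≤ j + k)
    (hleft : |u (j - 1)| ≤ B) (hright : |u (j + k)| ≤ B) :
    |boxDet V b E k (θ + j * b)| * |u p| ≤ 2 * B * Real.exp ((k - g) * Λ + A) := by
  obtain ⟨l, hl⟩ := Int.eq_ofNat_of_zero_le (show 0 ≤ p - j by omega)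
  obtain ⟨m, hm⟩ := Int.eq_ofNat_of_zero_le (show 0 ≤ j + k - (p + 1) by omega)
  obtain rfl : p = j + l := by omega
  obtain rfl : k = l + 1 + m := by omega
  have hdet' : ∀ i : ℕ, i + g ≤ l + 1 + m → ∀ x,
      |boxDet V b E i x| ≤ Real.exp (((l + 1 + m : ℕ) - g) * Λ + A) := fun i hi x => by
    refine (hdet i x).trans ?_
    gcongr
    exact le_sub_iff_add_le.mpr (by exact_mod_cast hi)
  rw [← abs_mul, hu.green]
  calc _ ≤ |boxDet V b E m (θ + (j + l + 1 : ℤ) * b)| * |u (j - 1)| +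
          |boxDet V b E l (θ + j * b)| * |u (j + l + 1 + m)| := by
        rw [← abs_mul, ← abs_mul]
        exact abs_add_le _ _
    _ ≤ Real.exp (((l + 1 + m : ℕ) - g) * Λ + A) * B +
          Real.exp (((l + 1 + m : ℕ) - g) * Λ + A) * B := by
        gcongr
        · exact hdet' m (by omega) _
        · exact hdet' l (by omega) _
        · simpa [add_assoc] using hright
    _ = _ := by ring

end Green

theorem boxDet_add_two_left (V : ℝ → ℝ) (b E : ℝ) (n : ℕ) (x : ℝ) :
    boxDet V b E (n + 2) x =
      (E - V x) * boxDet V b E (n + 1) (x + b) - boxDet V b E n (x + 2 * b) := by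
  induction n using Nat.twoStepInduction with
  | zero => simp [boxDet, mul_comm]
  | one =>
    have hphase : x + (1 + 1) * b = x + b + b := by ring
    simp only [boxDet, Nat.cast_zero, Nat.cast_one, zero_add, one_mul, hphase, two_mul, add_assoc]
    ring
  | more n ih ih' =>
    have hright : boxDet V b E (n + 2 + 2) x =
        (E - V (x + ((n + 2 : ℕ) + 1) * b)) * boxDet V b E (n + 3) x - boxDet V b E (n + 2) x := rfl
    have hmiddle : boxDet V b E (n + 2 + 1) (x + b) =
        (E - V (x + b + ((n + 1 : ℕ) + 1) * b)) * boxDet V b E (n + 2) (x + b) -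
          boxDet V b E (n + 1) (x + b) := rfl
    have hleft : boxDet V b E (n + 2) (x + 2 * b) =
        (E - V (x + 2 * b + (n + 1) * b)) * boxDet V b E (n + 1) (x + 2 * b) -
          boxDet V b E n (x + 2 * b) := rfl
    have hphase : x + b + ((n + 1 : ℕ) + 1) * b = x + ((n + 2 : ℕ) + 1) * b := by push_cast; ring
    have hphase' : x + 2 * b + (n + 1) * b = x + ((n + 2 : ℕ) + 1) * b := by push_cast; ring
    rw [hright, ih, ih', hmiddle, hleft, hphase, hphase']
    ring

theorem boxDet_reflect {V : ℝ → ℝ} (hV : Function.Even V) (b E : ℝ) (n : ℕ) (x : ℝ) :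
    boxDet V b E n (-x - (n - 1) * b) = boxDet V b E n x := by
  induction n using Nat.twoStepInduction generalizing x with
  | zero => simp only [boxDet]
  | one => simp [boxDet, hV x]
  | more n ih ih' =>
    have h0 : -x - ((n + 2 : ℕ) - 1) * b + (n + 1) * b = -x := by push_cast; ring
    have h1 : -x - ((n + 2 : ℕ) - 1) * b = -(x + b) - ((n + 1 : ℕ) - 1) * b := by push_cast; ring
    have h2 : -x - ((n + 2 : ℕ) - 1) * b = -(x + 2 * b) - (n - 1) * b := by push_cast; ring
    rw [boxDet, h0, hV, boxDet_add_two_left V b E n x, ← ih (x + 2 * b), ← ih' (x + b), ← h1, ← h2]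

section TrigPoly

/-- `f` is a trigonometric polynomial of degree at most `m` and period `1`, written in terms of the
cosine and sine of `2πx`; `B = 0` is allowed when `m = 0`, since then `B.degree + 1 = ⊥`. -/
def IsTrigPoly (m : ℕ) (f : ℝ → ℝ) : Prop :=
  ∃ A B : Polynomial ℝ, A.degree ≤ m ∧ B.degree + 1 ≤ m ∧
    ∀ x, f x = A.eval (Real.cos (2 * π * x)) +
      Real.sin (2 * π * x) * B.eval (Real.cos (2 * π * x))

variable {m n : ℕ} {f g : ℝ → ℝ}

theorem isTrigPoly_const (c : ℝ) : IsTrigPoly 0 fun _ => c :=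
  ⟨.C c, 0, Polynomial.degree_C_le, by simp, fun x => by simp⟩

theorem isTrigPoly_add_mul_cos (c d t : ℝ) :
    IsTrigPoly 1 fun x => c + d * Real.cos (2 * π * (x + t)) := by
  refine ⟨.C c + .C (d * Real.cos (2 * π * t)) * .X, .C (-(d * Real.sin (2 * π * t))), ?_, ?_,
    fun x => ?_⟩
  · compute_degree
    exact le_rfl
  · exact (add_le_add_left Polynomial.degree_C_le 1).trans_eq (zero_add 1)
  · simp only [mul_add, Real.cos_add, Polynomial.eval_add, Polynomial.eval_mul, Polynomial.eval_C,
      Polynomial.eval_X]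
    ring

theorem IsTrigPoly.sub (hf : IsTrigPoly m f) (hg : IsTrigPoly m g) :
    IsTrigPoly m fun x => f x - g x := by
  obtain ⟨A, B, hA, hB, hf⟩ := hf
  obtain ⟨A', B', hA', hB', hg⟩ := hg
  refine ⟨A - A', B - B', (Polynomial.degree_sub_le _ _).trans (max_le hA hA'), ?_, fun x => ?_⟩
  · calc (B - B').degree + 1 ≤ max B.degree B'.degree + 1 := by
          gcongr
          exact Polynomial.degree_sub_le _ _
      _ ≤ m := by
          rcases max_choice B.degree B'.degree with h | h <;> rwa [h]
  · simp only [hf, hg, Polynomial.eval_sub]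
    ring

theorem IsTrigPoly.mul (hf : IsTrigPoly m f) (hg : IsTrigPoly n g) :
    IsTrigPoly (m + n) fun x => f x * g x := by
  obtain ⟨A, B, hA, hB, hf⟩ := hf
  obtain ⟨A', B', hA', hB', hg⟩ := hg
  have hquad : (1 - Polynomial.X ^ 2 : Polynomial ℝ).degree ≤ 1 + 1 := by
    compute_degree
    exact one_add_one_eq_two.ge
  refine ⟨A * A' + (1 - Polynomial.X ^ 2) * (B * B'), A * B' + B * A', ?_, ?_, fun x => ?_⟩
  · refine (Polynomial.degree_add_le _ _).trans (max_le ?_ ?_)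
    · exact Polynomial.degree_mul_le_of_le hA hA'
    · calc ((1 - Polynomial.X ^ 2) * (B * B')).degree ≤ (1 + 1) + (B.degree + B'.degree) :=
            Polynomial.degree_mul_le_of_le hquad (Polynomial.degree_mul_le _ _)
        _ = (B.degree + 1) + (B'.degree + 1) := by abel
        _ ≤ m + n := add_le_add hB hB'
  · have hmul : ∀ P Q : Polynomial ℝ, ∀ i j : ℕ, P.degree ≤ i → Q.degree + 1 ≤ j →
        (P * Q).degree + 1 ≤ i + j := fun P Q i j hP hQ =>
      calc (P * Q).degree + 1 ≤ P.degree + Q.degree + 1 := by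
            gcongr
            exact Polynomial.degree_mul_le _ _
        _ = P.degree + (Q.degree + 1) := add_assoc _ _ _
        _ ≤ i + j := add_le_add hP hQ
    refine (add_le_add_left (Polynomial.degree_add_le _ _) 1).trans ?_
    rcases max_choice (A * B').degree (B * A').degree with h | h <;> rw [h]
    · exact hmul A B' m n hA hB'
    · rw [mul_comm B, add_comm m]
      exact hmul A' B n m hA' hB
  · simp only [hf, hg, Polynomial.eval_add, Polynomial.eval_mul, Polynomial.eval_sub,
      Polynomial.eval_one, Polynomial.eval_pow, Polynomial.eval_X, ← Real.sin_sq]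
    ring

theorem IsTrigPoly.exists_eval_cos (hf : IsTrigPoly m f) (heven : Function.Even f) :
    ∃ Q : Polynomial ℝ, Q.degree ≤ m ∧ ∀ x, f x = Q.eval (Real.cos (2 * π * x)) := by
  obtain ⟨A, B, hA, -, hf⟩ := hf
  refine ⟨A, hA, fun x => ?_⟩
  have hneg := hf (-x)
  rw [heven, mul_neg, Real.cos_neg, Real.sin_neg] at hneg
  linarith [hf x]

end TrigPoly

/-- The denominator `1 - α cos(2πx)` of the potential. -/
noncomputable def potDenom (α x : ℝ) : ℝ := 1 - α * Real.cos (2 * π * x)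

section Potential

variable {α : ℝ}

theorem potDenom_pos (hα : α ∈ Set.Ioo (-1 : ℝ) 1) (x : ℝ) : 0 < potDenom α x := by
  have hlt : |α * Real.cos (2 * π * x)| < 1 := by
    rw [abs_mul]
    exact mul_lt_one_of_nonneg_of_lt_one_left (abs_nonneg α) (abs_lt.mpr hα)
      (Real.abs_cos_le_one _)
  exact sub_pos.mpr (abs_lt.mp hlt).2

theorem continuous_potDenom (α : ℝ) : Continuous (potDenom α) := by
  unfold potDenom
  fun_prop

theorem periodic_cos_two_pi_mul : Function.Periodic (fun x => Real.cos (2 * π * x)) 1 :=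
  fun x => by simp only [mul_add, mul_one, Real.cos_add_two_pi]

theorem periodic_potDenom (α : ℝ) : Function.Periodic (potDenom α) 1 :=
  periodic_cos_two_pi_mul.comp fun c => 1 - α * c

theorem periodic_potV (α lam : ℝ) : Function.Periodic (potV α lam) 1 :=
  periodic_cos_two_pi_mul.comp fun c => 2 * lam * c / (1 - α * c)

theorem even_potDenom (α : ℝ) : Function.Even (potDenom α) := fun x => by
  rw [potDenom, potDenom, mul_neg, Real.cos_neg]

theorem even_potV (α lam : ℝ) : Function.Even (potV α lam) := fun x => by
  rw [potV, potV, mul_neg, Real.cos_neg]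

theorem continuous_potV (hα : α ∈ Set.Ioo (-1 : ℝ) 1) (lam : ℝ) : Continuous (potV α lam) :=
  Continuous.div (by fun_prop) (continuous_potDenom α) fun x => (potDenom_pos hα x).ne'

theorem potV_mul_potDenom (hα : α ∈ Set.Ioo (-1 : ℝ) 1) (lam x : ℝ) :
    potV α lam x * potDenom α x = 2 * lam * Real.cos (2 * π * x) :=
  div_mul_cancel₀ _ (potDenom_pos hα x).ne'

end Potential

/-- The determinant `boxDet` of the Schrödinger operator with potential `potV`, with the
denominators of the potential cleared. -/
noncomputable def boxNumer (α lam b E : ℝ) (n : ℕ) (x : ℝ) : ℝ :=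
  boxDet (potV α lam) b E n x * ∏ j ∈ Finset.range n, potDenom α (x + j * b)

theorem isTrigPoly_boxNumer {α : ℝ} (hα : α ∈ Set.Ioo (-1 : ℝ) 1) (lam b E t : ℝ) (n : ℕ) :
    IsTrigPoly n fun x => boxNumer α lam b E n (x + t) := by
  have hden : ∀ s, IsTrigPoly 1 fun x => potDenom α (x + s) := fun s => by
    simpa only [potDenom, neg_mul, ← sub_eq_add_neg] using isTrigPoly_add_mul_cos 1 (-α) s
  have hsite : ∀ s, IsTrigPoly 1 fun x =>
      (E - potV α lam (x + s)) * potDenom α (x + s) := fun s => by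
    convert isTrigPoly_add_mul_cos E (-(E * α) - 2 * lam) s using 2 with x
    rw [sub_mul, potV_mul_potDenom hα, potDenom]
    ring
  induction n using Nat.twoStepInduction with
  | zero => simpa [boxNumer, boxDet] using isTrigPoly_const 1
  | one => simpa [boxNumer, boxDet] using hsite t
  | more n ih ih' =>
    have hdeg : n + 2 = 1 + (n + 1) := by ring
    have hdeg' : 1 + (n + 1) = 1 + (1 + n) := by ring
    rw [hdeg]
    convert ((hsite (t + (n + 1) * b)).mul ih').sub
      (hdeg' ▸ (hden (t + n * b)).mul ((hden (t + (n + 1) * b)).mul ih)) using 2 with x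
    rw [← hdeg]
    simp only [boxNumer, boxDet, Finset.prod_range_succ, ← add_assoc]
    push_cast
    ring

theorem boxNumer_reflect (α lam b E : ℝ) (n : ℕ) (x : ℝ) :
    boxNumer α lam b E n (-x - (n - 1) * b) = boxNumer α lam b E n x := by
  rw [boxNumer, boxDet_reflect (even_potV α lam), boxNumer, ← Finset.prod_range_reflect]
  congr 1
  refine Finset.prod_congr rfl fun j hj => ?_
  have hcast : ((n - 1 - j : ℕ) : ℝ) = n - 1 - j := by
    rw [Nat.cast_sub (by have := Finset.mem_range.mp hj; omega), Nat.cast_pred]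
    exact Nat.pos_of_ne_zero fun h => by simp [h] at hj
  rw [hcast, ← even_potDenom]
  congr 1
  ring

theorem exists_boxNumer_eq_eval_cos {α : ℝ} (hα : α ∈ Set.Ioo (-1 : ℝ) 1) (lam b E : ℝ) (n : ℕ) :
    ∃ Q : Polynomial ℝ, Q.degree ≤ n ∧
      ∀ x, boxNumer α lam b E n x = Q.eval (Real.cos (2 * π * (x + (n - 1) * b / 2))) := by
  obtain ⟨Q, hQ, heval⟩ :=
    (isTrigPoly_boxNumer hα lam b E (-((n - 1) * b / 2)) n).exists_eval_cos fun x => by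
      rw [← boxNumer_reflect]
      congr 1
      ring
  exact ⟨Q, hQ, fun x => by rw [← heval, add_neg_cancel_right]⟩

theorem exists_rpow_le_mul_exp (r : ℝ) {η : ℝ} (hη : 0 < η) :
    ∃ C > 0, ∀ x : ℝ, 1 ≤ x → x ^ r ≤ C * Real.exp (η * x) := by
  refine ⟨⌈r⌉₊.factorial / η ^ ⌈r⌉₊, by positivity, fun x hx => ?_⟩
  have hexp := Real.pow_div_factorial_le_exp (η * x) (by positivity) ⌈r⌉₊
  calc x ^ r ≤ x ^ (⌈r⌉₊ : ℝ) := Real.rpow_le_rpow_of_exponent_le hx (Nat.le_ceil r)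
    _ = ⌈r⌉₊.factorial / η ^ ⌈r⌉₊ * ((η * x) ^ ⌈r⌉₊ / ⌈r⌉₊.factorial) := by
      rw [Real.rpow_natCast, mul_pow]
      field_simp
    _ ≤ _ := by gcongr

theorem card_le_of_pairwise_le_abs_sub {S : Finset ℤ} {p q : ℤ} {G : ℝ} (hpq : p ≤ q)
    (hS : S ⊆ Finset.Ico p q) (hG : 0 < G)
    (hsep : ∀ i ∈ S, ∀ j ∈ S, i ≠ j → G ≤ |(i : ℝ) - j|) :
    (S.card : ℝ) ≤ 1 + (q - p) / G := by
  have hpq' : (0 : ℝ) ≤ (q - p) / G := div_nonneg (by exact_mod_cast sub_nonneg.mpr hpq) hG.le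
  have hmaps : Set.MapsTo (fun j : ℤ => ⌊((j : ℝ) - p) / G⌋) S (Finset.Icc 0 ⌊((q : ℝ) - p) / G⌋) :=
    fun j hj => by
      obtain ⟨hpj, hjq⟩ := Finset.mem_Ico.mp (hS hj)
      have hpj' : (0 : ℝ) ≤ j - p := by exact_mod_cast sub_nonneg.mpr hpj
      rw [Finset.coe_Icc, Set.mem_Icc, Int.floor_nonneg]
      exact ⟨by positivity, Int.floor_mono (by gcongr)⟩
  have hinj : Set.InjOn (fun j : ℤ => ⌊((j : ℝ) - p) / G⌋) S := fun i hi j hj hij => by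
    by_contra hne
    have hlt := Int.abs_sub_lt_one_of_floor_eq_floor hij
    rw [← sub_div, sub_sub_sub_cancel_right, abs_div, abs_of_pos hG, div_lt_one hG] at hlt
    exact (hsep i hi j hj hne).not_gt hlt
  have hcard := Finset.card_le_card_of_injOn _ hmaps hinj
  rw [Int.card_Icc, sub_zero] at hcard
  calc (S.card : ℝ) ≤ ((⌊((q : ℝ) - p) / G⌋ + 1).toNat : ℤ) := by exact_mod_cast hcard
    _ = ⌊((q : ℝ) - p) / G⌋ + 1 := by
      rw [Int.toNat_of_nonneg (add_nonneg (Int.floor_nonneg.mpr hpq') zero_le_one)]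
      push_cast
      rfl
    _ ≤ 1 + (q - p) / G := by linarith [Int.floor_le (((q : ℝ) - p) / G)]

theorem sub_le_card_filter_lt {t : ℝ} {T K : ℕ} (ht : t ≤ K) :
    t - T ≤ ((Finset.Ico T K).filter fun s : ℕ => (s : ℝ) < t).card := by
  have hsub : Finset.Ico T ⌈t⌉₊ ⊆ (Finset.Ico T K).filter fun s : ℕ => (s : ℝ) < t := fun s hs => by
    obtain ⟨hTs, hst⟩ := Finset.mem_Ico.mp hs
    exact Finset.mem_filter.mpr
      ⟨Finset.mem_Ico.mpr ⟨hTs, hst.trans_le (Nat.ceil_le.mpr ht)⟩, Nat.lt_ceil.mp hst⟩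
  have hcard := Finset.card_le_card hsub
  rw [Nat.card_Ico, tsub_le_iff_right] at hcard
  rw [sub_le_iff_le_add]
  exact (Nat.le_ceil t).trans (by exact_mod_cast hcard)

section Diophantine

variable {b r : ℝ}

theorem DiophantineExp.irrational (h : DiophantineExp b r) : Irrational b := by
  obtain ⟨-, c, hc, h⟩ := h
  rintro ⟨q, rfl⟩
  have hq := h q.den (by exact_mod_cast q.den_ne_zero)
  have hangle : 2 * π * ((q.den : ℤ) : ℝ) * q = (2 * q.num : ℤ) * π := by
    have hmul : ((q.den : ℤ) : ℝ) * q = q.num := by exact_mod_cast q.den_mul_eq_num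
    rw [mul_assoc, hmul]
    push_cast
    ring
  rw [hangle, Real.sin_int_mul_pi, abs_zero] at hq
  exact hq.not_ge (by positivity)

theorem DiophantineExp.exists_le_abs_sin_pi (h : DiophantineExp b r) :
    ∃ c > 0, ∀ n : ℤ, n ≠ 0 → c / |(n : ℝ)| ^ r ≤ |Real.sin (π * (n * b))| := by
  obtain ⟨-, c, hc, h⟩ := h
  refine ⟨c / 2, by positivity, fun n hn => ?_⟩
  have hdouble : |Real.sin (2 * π * n * b)| ≤ 2 * |Real.sin (π * (n * b))| := by
    have hangle : 2 * π * n * b = 2 * (π * (n * b)) := by ring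
    rw [hangle, Real.sin_two_mul, abs_mul, abs_mul, abs_two]
    exact mul_le_of_le_one_right (by positivity) (Real.abs_cos_le_one _)
  rw [div_right_comm]
  linarith [h n hn]

theorem DiophantineExp.exists_exp_le_abs_sin_pi (h : DiophantineExp b r) {η : ℝ} (hη : 0 < η) :
    ∃ C, ∀ n : ℤ, n ≠ 0 → Real.exp (-(η * |(n : ℝ)| + C)) ≤ |Real.sin (π * (n * b))| := by
  obtain ⟨c, hc, h⟩ := h.exists_le_abs_sin_pi
  obtain ⟨C, hC, hpow⟩ := exists_rpow_le_mul_exp r hη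
  refine ⟨Real.log (C / c), fun n hn => le_trans ?_ (h n hn)⟩
  have hn' : 1 ≤ |(n : ℝ)| := by exact_mod_cast Int.one_le_abs hn
  rw [Real.exp_neg, Real.exp_add, Real.exp_log (by positivity),
    inv_le_comm₀ (by positivity) (by positivity), inv_div, div_le_iff₀ hc]
  calc |(n : ℝ)| ^ r ≤ C * Real.exp (η * |(n : ℝ)|) := hpow _ hn'
    _ = Real.exp (η * |(n : ℝ)|) * (C / c) * c := by field_simp

theorem abs_sin_sub_le (x y : ℝ) : |Real.sin (x - y)| ≤ |Real.sin x| + |Real.sin y| := by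
  rw [Real.sin_sub]
  refine (abs_sub _ _).trans ?_
  rw [abs_mul, abs_mul]
  exact add_le_add (mul_le_of_le_one_right (abs_nonneg _) (Real.abs_cos_le_one y))
    (mul_le_of_le_one_left (abs_nonneg _) (Real.abs_cos_le_one x))

theorem DiophantineExp.exists_card_filter_abs_sin_lt_le (h : DiophantineExp b r) :
    ∃ C > 0, ∀ (p q : ℤ) (S : Finset ℤ) (y s : ℝ), p ≤ q → S ⊆ Finset.Ico p q →
      ((S.filter fun j : ℤ => |Real.sin (π * (y + j * b))| < Real.exp (-s)).card : ℝ) ≤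
        1 + C * (q - p) * Real.exp (-(s / r)) := by
  obtain ⟨c, hc, hsin⟩ := h.exists_le_abs_sin_pi
  have hr : 0 < r := zero_lt_one.trans h.1
  refine ⟨(2 / c) ^ r⁻¹, by positivity, fun p q S y s hpq hS => ?_⟩
  set G := (c / 2 * Real.exp s) ^ r⁻¹ with hG
  have hcard := card_le_of_pairwise_le_abs_sub (G := G) hpq
    ((Finset.filter_subset (fun j : ℤ => |Real.sin (π * (y + j * b))| < Real.exp (-s)) S).trans hS)
    (by positivity) fun i hi j hj hij => by
      have hi' := (Finset.mem_filter.mp hi).2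
      have hj' := (Finset.mem_filter.mp hj).2
      have hne : (i - j : ℤ) ≠ 0 := sub_ne_zero.mpr hij
      have hpos : 0 < |((i - j : ℤ) : ℝ)| := abs_pos.mpr (by exact_mod_cast hne)
      have hangle : π * ((i - j : ℤ) * b) = π * (y + i * b) - π * (y + j * b) := by
        push_cast
        ring
      have hsmall : |Real.sin (π * ((i - j : ℤ) * b))| ≤ 2 * Real.exp (-s) := by
        rw [hangle]
        exact (abs_sin_sub_le _ _).trans (by linarith)
      have hpow := (hsin _ hne).trans hsmall
      rw [div_le_iff₀ (by positivity), Real.exp_neg] at hpow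
      rw [← Int.cast_sub, hG, Real.rpow_inv_le_iff_of_pos (by positivity) hpos.le hr]
      calc c / 2 * Real.exp s ≤ 2 * (Real.exp s)⁻¹ * |((i - j : ℤ) : ℝ)| ^ r / 2 * Real.exp s := by
            gcongr
        _ = |((i - j : ℤ) : ℝ)| ^ r := by field_simp
  refine hcard.trans_eq ?_
  rw [hG, Real.mul_rpow (by positivity) (Real.exp_pos s).le, ← Real.exp_mul, ← div_eq_mul_inv s,
    Real.exp_neg, ← inv_div c 2, Real.inv_rpow (by positivity)]
  field_simp

end Diophantine

/-- The logarithm of `|sin πx|`, truncated from below at `-T` so that it is continuous. -/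
noncomputable def logSinTrunc (T : ℕ) (x : ℝ) : ℝ :=
  Real.log (max |Real.sin (π * x)| (Real.exp (-T)))

section LogSinTrunc

variable {T : ℕ}

theorem continuous_logSinTrunc (T : ℕ) : Continuous (logSinTrunc T) :=
  Continuous.log (by fun_prop) fun _ => (lt_max_of_lt_right (Real.exp_pos _)).ne'

theorem periodic_logSinTrunc (T : ℕ) : Function.Periodic (logSinTrunc T) 1 := fun x => by
  rw [logSinTrunc, mul_add, mul_one, Real.sin_add_pi, abs_neg, logSinTrunc]

theorem abs_sin_le_exp_logSinTrunc (T : ℕ) (x : ℝ) :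
    |Real.sin (π * x)| ≤ Real.exp (logSinTrunc T x) := by
  rw [logSinTrunc, Real.exp_log (lt_max_of_lt_right (Real.exp_pos _))]
  exact le_max_left _ _

theorem logSinTrunc_eq_max {x : ℝ} (hx : 0 < |Real.sin (π * x)|) :
    logSinTrunc T x = max (Real.log |Real.sin (π * x)|) (-T) := by
  rw [logSinTrunc]
  rcases le_total |Real.sin (π * x)| (Real.exp (-T)) with h | h
  · rw [max_eq_right h, Real.log_exp, max_eq_right ((Real.log_le_iff_le_exp hx).mpr h)]
  · rw [max_eq_left h, max_eq_left ((Real.le_log_iff_exp_le hx).mpr h)]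

theorem logSinTrunc_le {K : ℕ} {x : ℝ} (hx : Real.exp (-K) ≤ |Real.sin (π * x)|) :
    logSinTrunc T x ≤ Real.log |Real.sin (π * x)| +
      ((Finset.Ico T K).filter fun s : ℕ => |Real.sin (π * x)| < Real.exp (-s)).card := by
  have hpos := (Real.exp_pos _).trans_le hx
  have hcard := sub_le_card_filter_lt (T := T) (t := -Real.log |Real.sin (π * x)|)
    (neg_le.mp ((Real.le_log_iff_exp_le hpos).mpr hx))
  have hiff : ∀ s : ℕ, (s : ℝ) < -Real.log |Real.sin (π * x)| ↔
      |Real.sin (π * x)| < Real.exp (-s) := fun s => by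
    rw [lt_neg, Real.log_lt_iff_lt_exp hpos]
  simp only [hiff] at hcard
  rw [logSinTrunc_eq_max hpos]
  exact max_le (le_add_of_nonneg_right (Nat.cast_nonneg _)) (by linarith)

end LogSinTrunc

section SineProducts

variable {b r ε : ℝ}

theorem DiophantineExp.exists_sum_card_filter_le (h : DiophantineExp b r) (hε : 0 < ε) :
    ∃ T : ℕ, ∀ (p q : ℤ) (S : Finset ℤ) (y : ℝ) (K : ℕ), p ≤ q → S ⊆ Finset.Ico p q →
      ∑ s ∈ Finset.Ico T K,
        ((S.filter fun j : ℤ => |Real.sin (π * (y + j * b))| < Real.exp (-s)).card : ℝ) ≤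
          K + ε * (q - p) := by
  obtain ⟨C, hC, hcard⟩ := h.exists_card_filter_abs_sin_lt_le
  set ρ := Real.exp (-(1 / r)) with hρ
  have hρ1 : ρ < 1 := by
    rw [hρ, Real.exp_lt_one_iff, neg_lt_zero]
    exact one_div_pos.mpr (zero_lt_one.trans h.1)
  obtain ⟨T, hT⟩ := exists_pow_lt_of_lt_one (show 0 < ε * (1 - ρ) / C from
    div_pos (mul_pos hε (sub_pos.mpr hρ1)) hC) hρ1
  refine ⟨T, fun p q S y K hpq hS => ?_⟩
  have hspan : (0 : ℝ) ≤ q - p := by exact_mod_cast sub_nonneg.mpr hpq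
  have hpow : ∀ s : ℕ, Real.exp (-(s / r)) = ρ ^ s := fun s => by
    rw [hρ, ← Real.exp_nat_mul]
    ring_nf
  have hgeom : C * ∑ s ∈ Finset.Ico T K, ρ ^ s ≤ ε := by
    have htail := geom_sum_Ico_le_of_lt_one (m := T) (n := K) (Real.exp_pos (-(1 / r))).le hρ1
    rw [← hρ, le_div_iff₀ (sub_pos.mpr hρ1)] at htail
    rw [lt_div_iff₀ hC] at hT
    nlinarith [sub_pos.mpr hρ1]
  calc _ ≤ ∑ s ∈ Finset.Ico T K, (1 + C * (q - p) * ρ ^ s) :=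
        Finset.sum_le_sum fun s _ => hpow s ▸ hcard p q S y s hpq hS
    _ = (K - T : ℕ) + C * (∑ s ∈ Finset.Ico T K, ρ ^ s) * (q - p) := by
        rw [Finset.sum_add_distrib, ← Finset.mul_sum, Finset.sum_const, Nat.card_Ico, nsmul_one]
        ring
    _ ≤ K + ε * (q - p) := by
        gcongr
        exact Nat.sub_le K T

theorem DiophantineExp.exists_sum_logSinTrunc_le (h : DiophantineExp b r) (hε : 0 < ε) :
    ∃ T : ℕ, ∀ (p q : ℤ) (S : Finset ℤ) (y κ : ℝ), p ≤ q → S ⊆ Finset.Ico p q → 0 ≤ κ →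
      (∀ j ∈ S, Real.exp (-κ) ≤ |Real.sin (π * (y + j * b))|) →
        ∑ j ∈ S, logSinTrunc T (y + j * b) ≤
          ∑ j ∈ S, Real.log |Real.sin (π * (y + j * b))| + (κ + 1 + ε * (q - p)) := by
  obtain ⟨T, hT⟩ := h.exists_sum_card_filter_le hε
  refine ⟨T, fun p q S y κ hpq hS hκ hsin => ?_⟩
  have hceil : ∀ j ∈ S, Real.exp (-⌈κ⌉₊) ≤ |Real.sin (π * (y + j * b))| := fun j hj =>
    (Real.exp_le_exp.mpr (neg_le_neg (Nat.le_ceil κ))).trans (hsin j hj)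
  have hswap := Finset.sum_card_bipartiteAbove_eq_sum_card_bipartiteBelow
    (fun (j : ℤ) (s : ℕ) => |Real.sin (π * (y + j * b))| < Real.exp (-s))
    (s := S) (t := Finset.Ico T ⌈κ⌉₊)
  calc _ ≤ _ := Finset.sum_le_sum fun j hj => logSinTrunc_le (T := T) (hceil j hj)
    _ ≤ _ := by
      rw [Finset.sum_add_distrib]
      have hsum := hT p q S y ⌈κ⌉₊ hpq hS
      simp only [Finset.bipartiteAbove, Finset.bipartiteBelow] at hswap
      replace hswap := congrArg (Nat.cast (R := ℝ)) hswap
      push_cast at hswap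
      linarith [Nat.ceil_lt_add_one hκ]

/-- Two blocks of consecutive integers, the index set of the interpolation nodes. -/
noncomputable def twoBlocks (p₁ q₁ p₂ q₂ : ℤ) : Finset ℤ := Finset.Ico p₁ q₁ ∪ Finset.Ico p₂ q₂

theorem sum_twoBlocks {M : Type*} [AddCommMonoid M] {p₁ q₁ p₂ q₂ : ℤ} (h : q₁ ≤ p₂) (f : ℤ → M) :
    ∑ j ∈ twoBlocks p₁ q₁ p₂ q₂, f j = ∑ j ∈ Finset.Ico p₁ q₁, f j + ∑ j ∈ Finset.Ico p₂ q₂, f j :=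
  Finset.sum_union <| Finset.disjoint_left.mpr fun _ hj hj' =>
    ((Finset.mem_Ico.mp hj).2.trans_le h).not_ge (Finset.mem_Ico.mp hj').1

theorem twoBlocks_subset_Ico {p₁ q₁ p₂ q₂ : ℤ} (h₁ : p₁ ≤ q₁) (h₁₂ : q₁ ≤ p₂) (h₂ : p₂ ≤ q₂) :
    twoBlocks p₁ q₁ p₂ q₂ ⊆ Finset.Ico p₁ q₂ :=
  Finset.union_subset (Finset.Ico_subset_Ico_right (h₁₂.trans h₂))
    (Finset.Ico_subset_Ico_left (h₁.trans h₁₂))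

theorem card_twoBlocks_le {p₁ q₁ p₂ q₂ : ℤ} (h₁ : p₁ ≤ q₁) (h₁₂ : q₁ ≤ p₂) (h₂ : p₂ ≤ q₂) :
    ((twoBlocks p₁ q₁ p₂ q₂).card : ℝ) ≤ q₂ - p₁ := by
  have hcard := Finset.card_le_card (twoBlocks_subset_Ico h₁ h₁₂ h₂)
  rw [Int.card_Ico] at hcard
  have hcard' : ((twoBlocks p₁ q₁ p₂ q₂).card : ℤ) ≤ q₂ - p₁ := by omega
  exact_mod_cast hcard'

theorem exists_sum_twoBlocks_erase_le (hb : Irrational b) {f : ℝ → ℝ} (hf : Continuous f)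
    (hper : Function.Periodic f 1) (hε : 0 < ε) :
    ∃ C, ∀ (p₁ q₁ p₂ q₂ : ℤ), p₁ ≤ q₁ → q₁ ≤ p₂ → p₂ ≤ q₂ →
      ∀ i ∈ twoBlocks p₁ q₁ p₂ q₂, ∀ x y : ℝ,
        ∑ j ∈ (twoBlocks p₁ q₁ p₂ q₂).erase i, f (x + j * b) ≤
          ∑ j ∈ (twoBlocks p₁ q₁ p₂ q₂).erase i, f (y + j * b) + (ε * (q₂ - p₁) + C) := by
  obtain ⟨C, h⟩ := exists_birkhoffSum_le_birkhoffSum_add hb hf hper hε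
  refine ⟨2 * C + (ε + C), fun p₁ q₁ p₂ q₂ h₁ h₁₂ h₂ i hi x y => ?_⟩
  have hpoint := h i (i + 1) y x (by omega)
  rw [Finset.Ico_add_one_right_eq_Icc, Finset.Icc_self, Finset.sum_singleton, Finset.sum_singleton]
    at hpoint
  have h₁₂' : (q₁ : ℝ) ≤ p₂ := by exact_mod_cast h₁₂
  rw [Finset.sum_erase_eq_sub hi, Finset.sum_erase_eq_sub hi, sum_twoBlocks h₁₂,
    sum_twoBlocks h₁₂]
  push_cast at hpoint
  nlinarith [h p₁ q₁ x y h₁, h p₂ q₂ x y h₂]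

theorem prod_abs_sin_eq_exp {S : Finset ℤ} {y : ℝ}
    (hS : ∀ j ∈ S, 0 < |Real.sin (π * (y + j * b))|) :
    ∏ j ∈ S, |Real.sin (π * (y + j * b))| =
      Real.exp (∑ j ∈ S, Real.log |Real.sin (π * (y + j * b))|) := by
  rw [Real.exp_sum]
  exact Finset.prod_congr rfl fun j hj => (Real.exp_log (hS j hj)).symm

theorem DiophantineExp.exists_prod_abs_sin_le (h : DiophantineExp b r) (hε : 0 < ε) :
    ∃ C, ∀ (p₁ q₁ p₂ q₂ : ℤ), p₁ ≤ q₁ → q₁ ≤ p₂ → p₂ ≤ q₂ →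
      ∀ i ∈ twoBlocks p₁ q₁ p₂ q₂, ∀ x y κ : ℝ, 0 ≤ κ →
        (∀ j ∈ (twoBlocks p₁ q₁ p₂ q₂).erase i,
          Real.exp (-κ) ≤ |Real.sin (π * (y + j * b))|) →
        ∏ j ∈ (twoBlocks p₁ q₁ p₂ q₂).erase i, |Real.sin (π * (x + j * b))| ≤
          Real.exp (κ + (ε * (q₂ - p₁) + C)) *
            ∏ j ∈ (twoBlocks p₁ q₁ p₂ q₂).erase i, |Real.sin (π * (y + j * b))| := by
  obtain ⟨T, hT⟩ := h.exists_sum_logSinTrunc_le (half_pos hε)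
  obtain ⟨C, hC⟩ := exists_sum_twoBlocks_erase_le h.irrational (continuous_logSinTrunc T)
    (periodic_logSinTrunc T) (half_pos hε)
  refine ⟨C + 1, fun p₁ q₁ p₂ q₂ h₁ h₁₂ h₂ i hi x y κ hκ hsin => ?_⟩
  have hsub : (twoBlocks p₁ q₁ p₂ q₂).erase i ⊆ Finset.Ico p₁ q₂ :=
    (Finset.erase_subset _ _).trans (twoBlocks_subset_Ico h₁ h₁₂ h₂)
  rw [prod_abs_sin_eq_exp (y := y) fun j hj => (Real.exp_pos _).trans_le (hsin j hj),
    ← Real.exp_add]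
  refine (Finset.prod_le_prod (fun _ _ => abs_nonneg _)
    fun j _ => abs_sin_le_exp_logSinTrunc T _).trans ?_
  rw [← Real.exp_sum, Real.exp_le_exp]
  linarith [hC p₁ q₁ p₂ q₂ h₁ h₁₂ h₂ i hi x y,
    hT p₁ q₂ _ y κ (h₁.trans (h₁₂.trans h₂)) hsub hκ hsin]

end SineProducts

theorem le_exp_mul_sub_log {η : ℝ} (hη : 0 < η) (x : ℝ) :
    x ≤ Real.exp (η * x - Real.log η) := by
  rw [Real.exp_sub, Real.exp_log hη, le_div_iff₀ hη]
  linarith [Real.add_one_le_exp (η * x)]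

section Interpolation

theorem exists_abs_eval_le_of_degree_lt {ι : Type*} [DecidableEq ι] {I : Finset ι} {z : ι → ℝ}
    {Q : Polynomial ℝ} {w R : ℝ} (hI : I.Nonempty) (hz : Set.InjOn z I) (hQ : Q.degree < I.card)
    (hR : ∀ i ∈ I, ∏ j ∈ I.erase i, |w - z j| ≤ R * ∏ j ∈ I.erase i, |z i - z j|) :
    ∃ i ∈ I, |Q.eval w| ≤ I.card * R * |Q.eval (z i)| := by
  obtain ⟨m, hm, hmax⟩ := I.exists_max_image (fun i => |Q.eval (z i)|) hI
  refine ⟨m, hm, ?_⟩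
  have hbasis : ∀ i ∈ I, |(Lagrange.basis I z i).eval w| ≤ R := fun i hi => by
    have hpos : 0 < ∏ j ∈ I.erase i, |z i - z j| := Finset.prod_pos fun j hj =>
      abs_pos.mpr <| sub_ne_zero.mpr fun hij => Finset.ne_of_mem_erase hj
        (hz hi (Finset.mem_of_mem_erase hj) hij).symm
    have heval : ∀ j, |(Lagrange.basisDivisor (z i) (z j)).eval w| = |w - z j| / |z i - z j| :=
      fun j => by
        rw [Lagrange.basisDivisor, Polynomial.eval_mul, Polynomial.eval_C, Polynomial.eval_sub,
          Polynomial.eval_X, Polynomial.eval_C, inv_mul_eq_div, abs_div]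
    simp only [Lagrange.basis, Polynomial.eval_prod, Finset.abs_prod, heval]
    rw [Finset.prod_div_distrib, div_le_iff₀ hpos]
    exact hR i hi
  rw [Lagrange.eq_interpolate hz hQ, Lagrange.interpolate_apply, Polynomial.eval_finsetSum,
    ← Lagrange.interpolate_apply, ← Lagrange.eq_interpolate hz hQ]
  calc _ ≤ ∑ _ ∈ I, |Q.eval (z m)| * R := by
        refine (Finset.abs_sum_le_sum_abs _ _).trans (Finset.sum_le_sum fun i hi => ?_)
        rw [Polynomial.eval_mul, Polynomial.eval_C, abs_mul]
        exact mul_le_mul (hmax i hi) (hbasis i hi) (abs_nonneg _) (abs_nonneg _)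
    _ = I.card * R * |Q.eval (z m)| := by
        rw [Finset.sum_const, nsmul_eq_mul]
        ring

theorem abs_cos_two_pi_mul_sub (x y : ℝ) :
    |Real.cos (2 * π * x) - Real.cos (2 * π * y)| =
      2 * (|Real.sin (π * (x + y))| * |Real.sin (π * (y - x))|) := by
  have hadd : (2 * π * x + 2 * π * y) / 2 = π * (x + y) := by ring
  have hsub : (2 * π * x - 2 * π * y) / 2 = -(π * (y - x)) := by ring
  rw [Real.cos_sub_cos, hadd, hsub, Real.sin_neg, abs_mul, abs_mul, abs_neg, abs_neg, abs_two,
    mul_assoc]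

theorem prod_abs_cos_sub_eq (S : Finset ℤ) (b v φ : ℝ) :
    ∏ j ∈ S, |Real.cos (2 * π * v) - Real.cos (2 * π * (φ + j * b))| =
      2 ^ S.card * ((∏ j ∈ S, |Real.sin (π * (v + φ + j * b))|) *
        ∏ j ∈ S, |Real.sin (π * (φ - v + j * b))|) := by
  simp only [abs_cos_two_pi_mul_sub, Finset.prod_mul_distrib, Finset.prod_const, add_assoc,
    add_sub_right_comm]

variable {b r ε : ℝ}

theorem abs_cast_sub_le_of_mem_Ico {i j p q : ℤ} (hi : i ∈ Finset.Ico p q)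
    (hj : j ∈ Finset.Ico p q) : |((j - i : ℤ) : ℝ)| ≤ q - p := by
  rw [Finset.mem_Ico] at hi hj
  have habs : |j - i| ≤ q - p := abs_le.mpr ⟨by omega, by omega⟩
  exact_mod_cast habs

theorem DiophantineExp.exists_prod_abs_cos_sub_le (h : DiophantineExp b r) (hε : 0 < ε) :
    ∃ C, ∀ (p₁ q₁ p₂ q₂ : ℤ), p₁ ≤ q₁ → q₁ ≤ p₂ → p₂ ≤ q₂ →
      ∀ i ∈ twoBlocks p₁ q₁ p₂ q₂, ∀ φ w κ : ℝ, 0 ≤ κ →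
        (∀ j ∈ (twoBlocks p₁ q₁ p₂ q₂).erase i,
          Real.exp (-κ) ≤ |Real.sin (π * (2 * φ + (i + j) * b))|) →
        ∏ j ∈ (twoBlocks p₁ q₁ p₂ q₂).erase i,
            |Real.cos (2 * π * w) - Real.cos (2 * π * (φ + j * b))| ≤
          Real.exp (κ + (ε * (q₂ - p₁) + C)) * ∏ j ∈ (twoBlocks p₁ q₁ p₂ q₂).erase i,
            |Real.cos (2 * π * (φ + i * b)) - Real.cos (2 * π * (φ + j * b))| := by
  obtain ⟨C, hC⟩ := h.exists_prod_abs_sin_le (ε := ε / 3) (by positivity)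
  obtain ⟨C', hC'⟩ := h.exists_exp_le_abs_sin_pi (η := ε / 3) (by positivity)
  refine ⟨2 * C + |C'|, fun p₁ q₁ p₂ q₂ h₁ h₁₂ h₂ i hi φ w κ hκ hsin => ?_⟩
  set S := (twoBlocks p₁ q₁ p₂ q₂).erase i with hS
  have hsum := hC p₁ q₁ p₂ q₂ h₁ h₁₂ h₂ i hi (w + φ) (φ + i * b + φ) κ hκ fun j hj => by
    convert hsin j hj using 4
    ring
  have hsub := twoBlocks_subset_Ico h₁ h₁₂ h₂
  have hspan : (0 : ℝ) ≤ q₂ - p₁ := by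
    exact_mod_cast sub_nonneg.mpr (h₁.trans (h₁₂.trans h₂))
  have hdiff := hC p₁ q₁ p₂ q₂ h₁ h₁₂ h₂ i hi (φ - w) (φ - (φ + i * b))
    (ε / 3 * (q₂ - p₁) + |C'|) (by positivity) fun j hj => by
      have hangle : φ - (φ + i * b) + j * b = (j - i : ℤ) * b := by
        push_cast
        ring
      rw [hangle]
      refine le_trans (Real.exp_le_exp.mpr (neg_le_neg (add_le_add ?_ (le_abs_self _))))
        (hC' (j - i) (sub_ne_zero.mpr (Finset.ne_of_mem_erase hj)))
      exact mul_le_mul_of_nonneg_left (abs_cast_sub_le_of_mem_Ico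
        (hsub hi) (hsub (Finset.mem_of_mem_erase hj))) (by positivity)
  rw [← hS] at hsum hdiff
  rw [prod_abs_cos_sub_eq, prod_abs_cos_sub_eq, mul_left_comm (Real.exp _)]
  refine mul_le_mul_of_nonneg_left ((mul_le_mul hsum hdiff
    (Finset.prod_nonneg fun _ _ => abs_nonneg _)
    (mul_nonneg (Real.exp_pos _).le (Finset.prod_nonneg fun _ _ => abs_nonneg _))).trans_eq ?_)
    (by positivity)
  rw [mul_mul_mul_comm, ← Real.exp_add]
  ring_nf

theorem exists_prod_potDenom_le {α : ℝ} (hα : α ∈ Set.Ioo (-1 : ℝ) 1) (hb : Irrational b)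
    (hε : 0 < ε) :
    ∃ C, ∀ (n : ℕ) (x y : ℝ), ∏ j ∈ Finset.range n, potDenom α (x + j * b) ≤
      Real.exp (ε * n + C) * ∏ j ∈ Finset.range n, potDenom α (y + j * b) := by
  obtain ⟨C, hC⟩ := exists_abs_birkhoffSum_sub_le hb
    ((continuous_potDenom α).log fun x => (potDenom_pos hα x).ne')
    ((periodic_potDenom α).comp Real.log) (half_pos hε)
  refine ⟨2 * C, fun n x y => ?_⟩
  have hexp : ∀ z, ∏ j ∈ Finset.range n, potDenom α (z + j * b) =
      Real.exp (∑ j ∈ Finset.range n, Real.log (potDenom α (z + j * b))) := fun z => by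
    rw [Real.exp_sum]
    exact Finset.prod_congr rfl fun j _ => (Real.exp_log (potDenom_pos hα _)).symm
  rw [hexp, hexp, ← Real.exp_add, Real.exp_le_exp]
  linarith [(abs_le.mp (hC n x)).2, (abs_le.mp (hC n y)).1]

theorem DiophantineExp.injOn_cos (h : DiophantineExp b r) {I : Finset ℤ} {φ : ℝ}
    (hsin : ∀ i ∈ I, ∀ j ∈ I.erase i, Real.sin (π * (2 * φ + (i + j) * b)) ≠ 0) :
    Set.InjOn (fun j : ℤ => Real.cos (2 * π * (φ + j * b))) I := fun i hi j hj hij => by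
  by_contra hne
  obtain ⟨c, hc, hdio⟩ := h.exists_le_abs_sin_pi
  have hji : j - i ≠ 0 := sub_ne_zero.mpr (Ne.symm hne)
  have hpos : 0 < |((j - i : ℤ) : ℝ)| := abs_pos.mpr (by exact_mod_cast hji)
  have hsum := abs_pos.mpr (hsin i hi j (Finset.mem_erase.mpr ⟨Ne.symm hne, hj⟩))
  have hdiff := (div_pos hc (Real.rpow_pos_of_pos hpos r)).trans_le (hdio _ hji)
  have hcos := abs_cos_two_pi_mul_sub (φ + i * b) (φ + j * b)
  have hadd : φ + i * b + (φ + j * b) = 2 * φ + (i + j) * b := by ring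
  have hsub : φ + j * b - (φ + i * b) = (j - i : ℤ) * b := by
    push_cast
    ring
  rw [hadd, hsub, sub_eq_zero_of_eq hij, abs_zero] at hcos
  exact (mul_pos two_pos (mul_pos hsum hdiff)).ne hcos

variable {α : ℝ}

theorem DiophantineExp.exists_abs_boxNumer_le (h : DiophantineExp b r)
    (hα : α ∈ Set.Ioo (-1 : ℝ) 1) (lam E : ℝ) (hε : 0 < ε) :
    ∃ C, ∀ (p₁ q₁ p₂ q₂ : ℤ) (k : ℕ), p₁ ≤ q₁ → q₁ ≤ p₂ → p₂ ≤ q₂ →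
      (twoBlocks p₁ q₁ p₂ q₂).card = k + 1 → ∀ θ κ x : ℝ, 0 ≤ κ →
      (∀ i ∈ twoBlocks p₁ q₁ p₂ q₂, ∀ j ∈ (twoBlocks p₁ q₁ p₂ q₂).erase i,
        Real.exp (-κ) ≤ |Real.sin (π * (2 * θ + (i + j + k - 1) * b))|) →
      ∃ i ∈ twoBlocks p₁ q₁ p₂ q₂, |boxNumer α lam b E k x| ≤
        Real.exp (κ + (ε * (q₂ - p₁) + C)) * |boxNumer α lam b E k (θ + i * b)| := by
  obtain ⟨C, hC⟩ := h.exists_prod_abs_cos_sub_le (half_pos hε)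
  refine ⟨C - Real.log (ε / 2), fun p₁ q₁ p₂ q₂ k h₁ h₁₂ h₂ hcard θ κ x hκ hsin => ?_⟩
  obtain ⟨Q, hdeg, hQ⟩ := exists_boxNumer_eq_eval_cos hα lam b E k
  set φ := θ + (k - 1) * b / 2 with hφ
  have hsin' : ∀ i ∈ twoBlocks p₁ q₁ p₂ q₂, ∀ j ∈ (twoBlocks p₁ q₁ p₂ q₂).erase i,
      Real.exp (-κ) ≤ |Real.sin (π * (2 * φ + (i + j) * b))| := fun i hi j hj => by
    convert hsin i hi j hj using 4
    rw [hφ]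
    ring
  have hinj := h.injOn_cos fun i hi j hj =>
    abs_pos.mp ((Real.exp_pos _).trans_le (hsin' i hi j hj))
  obtain ⟨i, hi, hle⟩ := exists_abs_eval_le_of_degree_lt (Finset.card_pos.mp (by omega)) hinj
    (hdeg.trans_lt (by rw [hcard]; exact_mod_cast Nat.lt_succ_self k))
    fun i hi => hC p₁ q₁ p₂ q₂ h₁ h₁₂ h₂ i hi φ (x + (k - 1) * b / 2) κ hκ (hsin' i hi)
  refine ⟨i, hi, ?_⟩
  have hnode : θ + i * b + (k - 1) * b / 2 = φ + i * b := by ring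
  have hcount : ((twoBlocks p₁ q₁ p₂ q₂).card : ℝ) ≤
      Real.exp (ε / 2 * (q₂ - p₁) - Real.log (ε / 2)) :=
    (card_twoBlocks_le h₁ h₁₂ h₂).trans (le_exp_mul_sub_log (half_pos hε) _)
  rw [hQ, hQ, hnode]
  refine hle.trans (mul_le_mul_of_nonneg_right ?_ (abs_nonneg _))
  refine (mul_le_mul_of_nonneg_right hcount (Real.exp_pos _).le).trans_eq ?_
  rw [← Real.exp_add]
  ring_nf

theorem DiophantineExp.exists_mem_twoBlocks_abs_boxDet_le (h : DiophantineExp b r)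
    (hα : α ∈ Set.Ioo (-1 : ℝ) 1) (lam E : ℝ) (hε : 0 < ε) :
    ∃ C, ∀ (p₁ q₁ p₂ q₂ : ℤ) (k : ℕ), p₁ ≤ q₁ → q₁ ≤ p₂ → p₂ ≤ q₂ →
      (twoBlocks p₁ q₁ p₂ q₂).card = k + 1 → ∀ θ κ x : ℝ, 0 ≤ κ →
      (∀ i ∈ twoBlocks p₁ q₁ p₂ q₂, ∀ j ∈ (twoBlocks p₁ q₁ p₂ q₂).erase i,
        Real.exp (-κ) ≤ |Real.sin (π * (2 * θ + (i + j + k - 1) * b))|) →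
      ∃ i ∈ twoBlocks p₁ q₁ p₂ q₂, |boxDet (potV α lam) b E k x| ≤
        Real.exp (κ + (ε * (q₂ - p₁) + C)) * |boxDet (potV α lam) b E k (θ + i * b)| := by
  obtain ⟨C, hC⟩ := h.exists_abs_boxNumer_le hα lam E (half_pos hε)
  obtain ⟨C', hC'⟩ := exists_prod_potDenom_le hα h.irrational (half_pos hε)
  refine ⟨C + C', fun p₁ q₁ p₂ q₂ k h₁ h₁₂ h₂ hcard θ κ x hκ hsin => ?_⟩
  obtain ⟨i, hi, hle⟩ := hC p₁ q₁ p₂ q₂ k h₁ h₁₂ h₂ hcard θ κ x hκ hsin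
  refine ⟨i, hi, ?_⟩
  have hspan : (k : ℝ) + 1 ≤ q₂ - p₁ := by
    have hle := card_twoBlocks_le h₁ h₁₂ h₂
    rw [hcard] at hle
    exact_mod_cast hle
  have hpos : ∀ y, 0 < ∏ j ∈ Finset.range k, potDenom α (y + j * b) := fun y =>
    Finset.prod_pos fun j _ => potDenom_pos hα _
  rw [boxNumer, boxNumer, abs_mul, abs_mul, abs_of_pos (hpos _), abs_of_pos (hpos _)] at hle
  refine le_of_mul_le_mul_right (hle.trans ?_) (hpos x)
  have hden : ∏ j ∈ Finset.range k, potDenom α (θ + i * b + j * b) ≤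
      Real.exp (ε / 2 * (q₂ - p₁) + C') * ∏ j ∈ Finset.range k, potDenom α (x + j * b) := by
    refine (hC' k (θ + i * b) x).trans (mul_le_mul_of_nonneg_right ?_ (hpos x).le)
    gcongr
    linarith
  calc _ ≤ Real.exp (κ + (ε / 2 * (q₂ - p₁) + C)) *
        (|boxDet (potV α lam) b E k (θ + i * b)| * (Real.exp (ε / 2 * (q₂ - p₁) + C') *
          ∏ j ∈ Finset.range k, potDenom α (x + j * b))) := by gcongr
    _ = _ := by
      rw [mul_left_comm |_|, ← mul_assoc, ← Real.exp_add, mul_assoc]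
      ring_nf

end Interpolation

/-- Growth slower than every exponential, the growth condition on formal eigenfunctions under which
the localization argument runs; it contains polynomial growth. -/
def IsSubexponential (u : ℤ → ℝ) : Prop :=
  ∀ η > 0, ∃ C, ∀ n : ℤ, |u n| ≤ Real.exp (η * |(n : ℝ)| + C)

/-- Non-resonance with vanishing exponential rate: `δ(b, θ) = 0` in the notation of Jitomirskaya,
where `δ(b, θ) = limsup -log |sin 2π(θ + mb/2)| / |m|`. -/
def SubexpNonResonant (b θ : ℝ) : Prop :=
  ∀ η > 0, ∀ᶠ m : ℤ in Filter.cofinite,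
    Real.exp (-(η * |(m : ℝ)|)) ≤ |Real.sin (2 * π * (θ + m * b / 2))|

section Localization

variable {α lam b r θ E : ℝ} {u : ℤ → ℝ}

theorem SubexpNonResonant.exists_exp_le_abs_sin (hres : SubexpNonResonant b θ) {η : ℝ}
    (hη : 0 < η) :
    ∃ M : ℕ, ∀ m : ℤ, M ≤ m → Real.exp (-(η * m)) ≤ |Real.sin (π * (2 * θ + m * b))| := by
  have h := hres η hη
  rw [Int.cofinite_eq, Filter.eventually_sup] at h
  obtain ⟨M, hM⟩ := Filter.eventually_atTop.mp h.2
  refine ⟨M.toNat, fun m hm => ?_⟩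
  have hm0 : (0 : ℝ) ≤ m := by exact_mod_cast (by omega : (0 : ℤ) ≤ m)
  have hphase : π * (2 * θ + m * b) = 2 * π * (θ + m * b / 2) := by ring
  simpa only [hphase, abs_of_nonneg hm0] using hM m (by omega)

/-- The two blocks consist of the left endpoints of the windows of length `k` in which `y`,
respectively `n`, is at distance at least `g` from the boundary: `2g + 1` and `k - 2g` nodes. The
length `k` is prescribed only up to a bounded error because `exists_le_abs_boxDet` does not produce
a large determinant of every size. -/
theorem DiophantineExp.exists_mem_twoBlocks_le_abs_boxDet (hdio : DiophantineExp b r)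
    (hα : α ∈ Set.Ioo (-1 : ℝ) 1) (hres : SubexpNonResonant b θ)
    (hL : 0 < lyap (potV α lam) b E) {ε : ℝ} (hε : 0 < ε) (y : ℤ) :
    ∃ (C : ℝ) (D : ℕ), ∀ (g : ℕ) (n : ℤ), 4 * g + D ≤ n → n ≤ 4 * g + D + 3 →
      ∃ k ∈ Set.Icc (6 * g) (6 * g + D),
        ∃ i ∈ twoBlocks (y - 3 * g) (y - g + 1) (n - k + 1 + g) (n - g + 1),
          Real.exp (k * lyap (potV α lam) b E - (ε * g + C)) ≤
            |boxDet (potV α lam) b E k (θ + i * b)| := by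
  obtain ⟨η, rfl⟩ : ∃ η, ε = 18 * η := ⟨ε / 18, by ring⟩
  have hη0 : 0 < η := by linarith
  obtain ⟨c, hc, hlarge⟩ := exists_le_abs_boxDet (continuous_potV hα lam) hL
  obtain ⟨C, hC⟩ := hdio.exists_mem_twoBlocks_abs_boxDet_le hα lam E hη0
  obtain ⟨M, hM⟩ := hres.exists_exp_le_abs_sin hη0
  set D := M + 3 + 3 * y.natAbs with hD
  refine ⟨η * (4 * D + 9 - y) + C - Real.log c, D, fun g n hn hn' => ?_⟩
  obtain ⟨k, ⟨hk, hk'⟩, x, hx⟩ := hlarge (6 * g + (M + 1 + 2 * y.natAbs))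
  refine ⟨k, ⟨by omega, by omega⟩, ?_⟩
  have hn'' : (n : ℝ) ≤ 4 * g + D + 3 := by exact_mod_cast hn'
  have hcard : (twoBlocks (y - 3 * g) (y - g + 1) (n - k + 1 + g) (n - g + 1)).card = k + 1 := by
    rw [Finset.card_eq_sum_ones, sum_twoBlocks (by omega), ← Finset.card_eq_sum_ones,
      ← Finset.card_eq_sum_ones, Int.card_Ico, Int.card_Ico]
    omega
  obtain ⟨i, hi, hle⟩ := hC _ _ _ _ k (by omega) (by omega) (by omega) hcard θ
    (η * (12 * g + 3 * D + 5)) x (by positivity) fun i hi j hj => by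
      have hi := Finset.mem_Ico.mp (twoBlocks_subset_Ico (by omega) (by omega) (by omega) hi)
      have hj := Finset.mem_Ico.mp
        (twoBlocks_subset_Ico (by omega) (by omega) (by omega) (Finset.mem_of_mem_erase hj))
      have hm : ((i + j + k - 1 : ℤ) : ℝ) ≤ 12 * g + 3 * D + 5 := by
        exact_mod_cast (by omega : i + j + k - 1 ≤ 12 * g + 3 * D + 5)
      refine le_trans ?_ ((hM (i + j + k - 1) (by omega)).trans_eq ?_)
      · gcongr
      · push_cast; ring_nf
  refine ⟨i, hi, ?_⟩
  have hchain := hx.trans hle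
  rw [← Real.exp_log hc, ← Real.exp_add, mul_comm, ← div_le_iff₀' (Real.exp_pos _),
    ← Real.exp_sub] at hchain
  refine (Real.exp_le_exp.mpr ?_).trans hchain
  have hnη := mul_le_mul_of_nonneg_left hn'' hη0.le
  push_cast
  linarith

theorem DiophantineExp.exists_abs_le_exp_or_abs_le_exp (hdio : DiophantineExp b r)
    (hα : α ∈ Set.Ioo (-1 : ℝ) 1) (hres : SubexpNonResonant b θ)
    (hL : 0 < lyap (potV α lam) b E) (hu : IsFormalEigenfunction (potV α lam) b θ E u)
    (hsub : IsSubexponential u) {ε : ℝ} (hε : 0 < ε) (y : ℤ) :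
    ∃ (C : ℝ) (D : ℕ), ∀ (g : ℕ) (n : ℤ), g ≠ 0 → 4 * g + D ≤ n → n ≤ 4 * g + D + 3 →
      |u y| ≤ Real.exp (C - (lyap (potV α lam) b E - ε) * g) ∨
        |u n| ≤ Real.exp (C - (lyap (potV α lam) b E - ε) * g) := by
  set L := lyap (potV α lam) b E
  obtain ⟨η, rfl⟩ : ∃ η, ε = 15 * η := ⟨ε / 15, by ring⟩
  have hη0 : 0 < η := by linarith
  obtain ⟨C, D, hlarge⟩ := hdio.exists_mem_twoBlocks_le_abs_boxDet (lam := lam) (E := E)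
    hα hres hL hη0 y
  obtain ⟨A, hA⟩ := exists_abs_boxDet_le (E := E) hdio.irrational (continuous_potV hα lam)
    (periodic_potV α lam) hη0
  obtain ⟨K, hK⟩ := hsub η hη0
  refine ⟨η * (3 * D + 4 + y.natAbs) + K + A + C + 1, D, fun g n hg hn hn' => ?_⟩
  obtain ⟨k, ⟨hk, hk'⟩, i, hi, hki⟩ := hlarge g n hn hn'
  rw [twoBlocks, Finset.mem_union, Finset.mem_Ico, Finset.mem_Ico] at hi
  have hbound : ∀ q : ℤ, q.natAbs ≤ 9 * g + 2 * D + 4 + y.natAbs →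
      |u q| ≤ Real.exp (η * (9 * g + 2 * D + 4 + y.natAbs) + K) := fun q hq => by
    have hq' : |(q : ℝ)| ≤ 9 * g + 2 * D + 4 + y.natAbs := by
      rw [← Int.cast_abs, ← Nat.cast_natAbs]
      exact_mod_cast hq
    exact (hK q).trans (by gcongr)
  have hsmall : ∀ p : ℤ, i + g ≤ p + 1 → p + g ≤ i + k →
      |u p| ≤ Real.exp (η * (3 * D + 4 + y.natAbs) + K + A + C + 1 - (L - 15 * η) * g) := by
    intro p hip hpk
    have hgreen := (mul_le_mul_of_nonneg_right hki (abs_nonneg (u p))).trans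
      (hu.abs_boxDet_mul_le (by positivity) hA hg hip hpk
        (hbound (i - 1) (by omega)) (hbound (i + k) (by omega)))
    rw [mul_assoc, ← Real.exp_add, ← le_div_iff₀' (Real.exp_pos _), mul_div_assoc,
      ← Real.exp_sub] at hgreen
    have htwo : (2 : ℝ) ≤ Real.exp 1 := by linarith [Real.add_one_le_exp 1]
    refine (hgreen.trans (mul_le_mul_of_nonneg_right htwo (Real.exp_pos _).le)).trans ?_
    rw [← Real.exp_add, Real.exp_le_exp]
    have hkη := mul_le_mul_of_nonneg_left (Nat.cast_le (α := ℝ).mpr hk') hη0.le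
    push_cast at hkη
    linarith
  exact hi.imp (fun hi => hsmall y (by omega) (by omega)) fun hi => hsmall n (by omega) (by omega)

end Localization

section Reflection

variable {V : ℝ → ℝ} {b θ E : ℝ} {u : ℤ → ℝ}

theorem IsFormalEigenfunction.comp_neg (hu : IsFormalEigenfunction V b θ E u)
    (hV : Function.Even V) : IsFormalEigenfunction V b (-θ) E (fun n => u (-n)) := by
  intro n
  have hphase : (n : ℝ) * b + -θ = -((-n : ℤ) * b + θ) := by push_cast; ring
  beta_reduce
  rw [hphase, hV, neg_add, ← sub_eq_add_neg, neg_sub', sub_neg_eq_add]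
  linarith [hu (-n)]

theorem SubexpNonResonant.neg (hres : SubexpNonResonant b θ) : SubexpNonResonant b (-θ) := by
  intro η hη
  filter_upwards [neg_injective.tendsto_cofinite.eventually (hres η hη)] with m hm
  have hphase : 2 * π * (θ + (-m : ℤ) * b / 2) = -(2 * π * (-θ + m * b / 2)) := by push_cast; ring
  rwa [hphase, Real.sin_neg, abs_neg, Int.cast_neg, abs_neg] at hm

theorem IsSubexponential.comp_neg (hu : IsSubexponential u) :
    IsSubexponential (fun n => u (-n)) := by
  intro η hη
  obtain ⟨C, hC⟩ := hu η hη
  exact ⟨C, fun n => by simpa using hC (-n)⟩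

end Reflection

section Decay

variable {α lam b r θ E β : ℝ} {u : ℤ → ℝ}

theorem DiophantineExp.eventually_atTop_abs_le_exp (hdio : DiophantineExp b r)
    (hα : α ∈ Set.Ioo (-1 : ℝ) 1) (hres : SubexpNonResonant b θ)
    (hL : 0 < lyap (potV α lam) b E) (hu : IsFormalEigenfunction (potV α lam) b θ E u)
    (hsub : IsSubexponential u) (hu₀ : u ≠ 0) (hβ : β < lyap (potV α lam) b E / 4) :
    ∀ᶠ n : ℤ in Filter.atTop, |u n| ≤ Real.exp (-(β * n)) := by
  obtain ⟨y, hy⟩ := Function.ne_iff.mp hu₀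
  obtain ⟨ε, hε, hεL⟩ := exists_between
    (lt_min hL (by linarith : 0 < lyap (potV α lam) b E - 4 * β))
  rw [lt_min_iff] at hεL
  obtain ⟨C, D, hCD⟩ := hdio.exists_abs_le_exp_or_abs_le_exp hα hres hL hu hsub hε y
  set γ := lyap (potV α lam) b E - ε
  have hγ : 0 < γ := sub_pos.mpr hεL.1
  have hβγ : 0 < γ - 4 * β := by simp only [γ]; linarith
  obtain ⟨G, hG⟩ := exists_nat_gt ((C - Real.log |u y|) / γ)
  filter_upwards [Filter.eventually_ge_atTop (4 * (G : ℤ) + D + 4),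
    tendsto_intCast_atTop_atTop.eventually_ge_atTop ((4 * C + γ * (D + 3)) / (γ - 4 * β))]
    with n hnG hn
  obtain ⟨g, hg, hg'⟩ : ∃ g : ℕ, 4 * (g : ℤ) + D ≤ n ∧ n ≤ 4 * g + D + 3 :=
    ⟨((n - D) / 4).toNat, by omega, by omega⟩
  rcases hCD g n (by omega) hg hg' with hsmall | hsmall
  · rw [← Real.log_le_iff_le_exp (abs_pos.mpr hy)] at hsmall
    rw [div_lt_iff₀ hγ] at hG
    have hGg : (G : ℝ) * γ ≤ g * γ := by gcongr; omega
    linarith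
  · refine hsmall.trans (Real.exp_le_exp.mpr ?_)
    rw [div_le_iff₀ hβγ] at hn
    have hng := mul_le_mul_of_nonneg_right (Int.cast_le (R := ℝ).mpr hg') hγ.le
    push_cast at hng
    linarith

theorem DiophantineExp.eventually_abs_le_exp (hdio : DiophantineExp b r)
    (hα : α ∈ Set.Ioo (-1 : ℝ) 1) (hres : SubexpNonResonant b θ)
    (hL : 0 < lyap (potV α lam) b E) (hu : IsFormalEigenfunction (potV α lam) b θ E u)
    (hsub : IsSubexponential u) (hu₀ : u ≠ 0) (hβ : β < lyap (potV α lam) b E / 4) :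
    ∀ᶠ n : ℤ in Filter.cofinite, |u n| ≤ Real.exp (-(β * |(n : ℝ)|)) := by
  have hright := hdio.eventually_atTop_abs_le_exp hα hres hL hu hsub hu₀ hβ
  have hneg₀ : (fun n => u (-n)) ≠ 0 := fun h =>
    hu₀ (funext fun n => by simpa using congrFun h (-n))
  have hleft := Filter.tendsto_neg_atBot_atTop.eventually <| hdio.eventually_atTop_abs_le_exp
    hα hres.neg hL (hu.comp_neg (even_potV α lam)) hsub.comp_neg hneg₀ hβ
  rw [Int.cofinite_eq, Filter.eventually_sup]
  constructor
  · filter_upwards [hleft, Filter.eventually_le_atBot 0] with n hn hn₀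
    rw [abs_of_nonpos (Int.cast_nonpos.mpr hn₀)]
    simpa using hn
  · filter_upwards [hright, Filter.eventually_ge_atTop 0] with n hn hn₀
    rwa [abs_of_nonneg (Int.cast_nonneg hn₀)]

end Decay

theorem tendsto_abs_intCast_cofinite :
    Filter.Tendsto (fun n : ℤ => |(n : ℝ)|) Filter.cofinite Filter.atTop :=
  (tendsto_norm_cocompact_atTop (E := ℝ)).comp Int.tendsto_coe_cofinite

theorem exists_nat_forall_lt_abs_of_eventually_cofinite {p : ℤ → Prop}
    (h : ∀ᶠ n in Filter.cofinite, p n) : ∃ N : ℕ, ∀ n : ℤ, (N : ℝ) < |(n : ℝ)| → p n := by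
  obtain ⟨N, hN⟩ := (Set.Finite.image Int.natAbs h).bddAbove
  refine ⟨N, fun n hn => by_contra fun hpn => hn.not_ge ?_⟩
  rw [← Int.cast_abs, ← Nat.cast_natAbs, Nat.cast_le]
  exact hN (Set.mem_image_of_mem _ hpn)

theorem NonResonant.subexpNonResonant {b r θ : ℝ} (hres : NonResonant b r θ) (hr : 1 < 2 * r) :
    SubexpNonResonant b θ := by
  intro η hη
  have hs : 0 < 1 - 1 / (2 * r) := sub_pos.mpr ((div_lt_one (by linarith)).mpr hr)
  have hsmall := (tendsto_rpow_neg_atTop hs).eventually_le_const hη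
  filter_upwards [hres.eventually_cofinite_notMem, tendsto_abs_intCast_cofinite.eventually hsmall,
    tendsto_abs_intCast_cofinite.eventually_gt_atTop 0] with m hm hmη hm₀
  refine le_trans (Real.exp_le_exp.mpr (neg_le_neg ?_)) (not_lt.mp hm)
  calc |(m : ℝ)| ^ (1 / (2 * r))
      = |(m : ℝ)| ^ (-(1 - 1 / (2 * r))) * |(m : ℝ)| := by
        rw [← Real.rpow_add_one hm₀.ne']; ring_nf
    _ ≤ η * |(m : ℝ)| := by gcongr

theorem isSubexponential_of_abs_le_rpow {u : ℤ → ℝ} {C δ : ℝ}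
    (h : ∀ n : ℤ, |u n| ≤ C * (1 + |(n : ℝ)|) ^ δ) : IsSubexponential u := by
  intro η hη
  obtain ⟨A, hA, hpow⟩ := exists_rpow_le_mul_exp δ hη
  refine ⟨C + Real.log A + η, fun n => ?_⟩
  have hC : C ≤ Real.exp C := by linarith [Real.add_one_le_exp C]
  calc |u n| ≤ C * (1 + |(n : ℝ)|) ^ δ := h n
    _ ≤ Real.exp C * (A * Real.exp (η * (1 + |(n : ℝ)|))) := by
      gcongr
      exact hpow _ (by linarith [abs_nonneg (n : ℝ)])
    _ = Real.exp (η * |(n : ℝ)| + (C + Real.log A + η)) := by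
      conv_lhs => rw [← Real.exp_log hA, ← Real.exp_add, ← Real.exp_add]
      ring_nf

theorem summable_exp_neg_mul_abs_intCast {β : ℝ} (hβ : 0 < β) :
    Summable fun n : ℤ => Real.exp (-(β * |(n : ℝ)|)) := by
  have hnat : Summable fun n : ℕ => Real.exp (-(β * |(n : ℝ)|)) := by
    simpa [mul_comm] using Real.summable_exp_nat_mul_iff.mpr (neg_lt_zero.mpr hβ)
  exact .of_nat_of_neg (by simpa using hnat) (by simpa using hnat)

theorem summable_sq_of_eventually_abs_le_exp {u : ℤ → ℝ} {β : ℝ} (hβ : 0 < β)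
    (h : ∀ᶠ n : ℤ in Filter.cofinite, |u n| ≤ Real.exp (-(β * |(n : ℝ)|))) :
    Summable fun n => u n ^ 2 := by
  refine .of_norm_bounded_eventually (summable_exp_neg_mul_abs_intCast hβ) ?_
  filter_upwards [h] with n hn
  have hle_one : Real.exp (-(β * |(n : ℝ)|)) ≤ 1 :=
    Real.exp_le_one_iff.mpr (neg_nonpos.mpr (by positivity))
  rw [norm_pow, Real.norm_eq_abs]
  exact (pow_le_of_le_one (abs_nonneg _) (hn.trans hle_one) two_ne_zero).trans hn

theorem IsFormalEigenfunction.exists_eigenvector {V : ℝ → ℝ} {b θ E : ℝ} {u : ℤ → ℝ}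
    (hu : IsFormalEigenfunction V b θ E u) (hu₀ : u ≠ 0) (hsum : Summable fun n => u n ^ 2)
    {H : lp (fun _ : ℤ => ℂ) 2 →L[ℂ] lp (fun _ : ℤ => ℂ) 2} (hH : IsSchrodingerOp V b θ H) :
    ∃ ψ : lp (fun _ : ℤ => ℂ) 2, ψ ≠ 0 ∧ H ψ = (E : ℂ) • ψ := by
  have hmem : Memℓp (fun n => (u n : ℂ)) 2 := memℓp_gen (by simpa using hsum)
  refine ⟨⟨_, hmem⟩, fun h => hu₀ (funext fun n => ?_), lp.ext (funext fun n => ?_)⟩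
  · have hn := congrArg (fun ψ : lp (fun _ : ℤ => ℂ) 2 => (ψ : ∀ _ : ℤ, ℂ) n) h
    simpa using hn
  · rw [hH]
    have hn := hu n
    simp only [lp.coeFn_smul, Pi.smul_apply, smul_eq_mul]
    exact_mod_cast hn

theorem eventually_exp_le_rpow_mul_exp {β γ C : ℝ} (hγβ : γ < β) (hC : 0 < C) (δ : ℝ) :
    ∀ᶠ x : ℝ in Filter.atTop,
      Real.exp (-(β * x)) ≤ C * (2 * x + 1) ^ δ * Real.exp (-(γ * x)) := by
  set η := (β - γ) / 2 with hη
  have hη₀ : 0 < η := by linarith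
  have htendsto : Filter.Tendsto (fun x : ℝ => 2 * x + 1) Filter.atTop Filter.atTop :=
    Filter.tendsto_atTop_add_const_right _ _ (Filter.tendsto_id.const_mul_atTop two_pos)
  filter_upwards [htendsto.eventually ((isLittleO_rpow_exp_pos_mul_atTop (-δ) hη₀).bound
    (by positivity : 0 < C * Real.exp (-η))), htendsto.eventually_gt_atTop 0] with x hx hx₀
  rw [Real.norm_of_nonneg (by positivity), Real.norm_of_nonneg (by positivity),
    Real.rpow_neg hx₀.le, inv_le_iff_one_le_mul₀' (by positivity)] at hx
  have hexp : Real.exp (-η) * Real.exp (η * (2 * x + 1)) * Real.exp (-(β * x)) =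
      Real.exp (-(γ * x)) := by
    rw [← Real.exp_add, ← Real.exp_add, hη]
    ring_nf
  calc Real.exp (-(β * x))
      ≤ (2 * x + 1) ^ δ * (C * Real.exp (-η) * Real.exp (η * (2 * x + 1))) *
          Real.exp (-(β * x)) := le_mul_of_one_le_left (Real.exp_pos _).le hx
    _ = C * (2 * x + 1) ^ δ * Real.exp (-(γ * x)) := by rw [← hexp]; ring

theorem exists_nat_abs_le_rpow_mul_exp {u : ℤ → ℝ} {β γ C δ : ℝ} (hγ : 0 ≤ γ) (hγβ : γ < β)
    (hu₀ : u ≠ 0) (hgrow : ∀ n : ℤ, |u n| ≤ C * (1 + |(n : ℝ)|) ^ δ)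
    (hdecay : ∀ᶠ n : ℤ in Filter.cofinite, |u n| ≤ Real.exp (-(β * |(n : ℝ)|))) :
    ∃ N : ℕ, ∀ n : ℤ, (N : ℝ) < |(n : ℝ)| →
      |u n| ≤ 2 * C * (2 * |(n : ℝ)| + 1) ^ δ * Real.exp (-γ * (|(n : ℝ)| - 1)) := by
  have hC : 0 < C := by
    obtain ⟨m, hm⟩ := Function.ne_iff.mp hu₀
    exact pos_of_mul_pos_left ((abs_pos.mpr hm).trans_le (hgrow m)) (by positivity)
  refine exists_nat_forall_lt_abs_of_eventually_cofinite ?_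
  filter_upwards [hdecay, tendsto_abs_intCast_cofinite.eventually
    (eventually_exp_le_rpow_mul_exp hγβ (by positivity : 0 < 2 * C) δ)] with n hn hrate
  refine hn.trans (hrate.trans ?_)
  gcongr
  linarith

theorem anderson_localization_decay_general {α lam b θ r : ℝ} (hα : α ∈ Set.Ioo (-1 : ℝ) 1)
    (hdio : DiophantineExp b r) (hres : SubexpNonResonant b θ)
    {H : lp (fun _ : ℤ => ℂ) 2 →L[ℂ] lp (fun _ : ℤ => ℂ) 2}
    (hH : IsSchrodingerOp (potV α lam) b θ H)
    {E : ℝ} (hL : 0 < lyap (potV α lam) b E)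
    {u : ℤ → ℝ} (hu₀ : u ≠ 0) (hu : IsFormalEigenfunction (potV α lam) b θ E u)
    (hsub : IsSubexponential u) :
    (∀ β < lyap (potV α lam) b E / 4,
      ∀ᶠ n : ℤ in Filter.cofinite, |u n| ≤ Real.exp (-(β * |(n : ℝ)|))) ∧
    Summable (fun n : ℤ => u n ^ 2) ∧
    ∃ ψ : lp (fun _ : ℤ => ℂ) 2, ψ ≠ 0 ∧ H ψ = (E : ℂ) • ψ := by
  have hdecay {β : ℝ} (hβ : β < lyap (potV α lam) b E / 4) :
      ∀ᶠ n : ℤ in Filter.cofinite, |u n| ≤ Real.exp (-(β * |(n : ℝ)|)) :=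
    hdio.eventually_abs_le_exp hα hres hL hu hsub hu₀ hβ
  have hsum : Summable fun n => u n ^ 2 :=
    summable_sq_of_eventually_abs_le_exp (half_pos (div_pos hL four_pos))
      (hdecay (half_lt_self (div_pos hL four_pos)))
  exact ⟨fun _ => hdecay, hsum, hu.exists_eigenvector hu₀ hsum hH⟩

/-- for Diophantine `b`, non-resonant `θ`, and `E` with `L(E) > 0`, every
nonzero polynomially bounded generalized eigenfunction `u` decays exponentially; in
particular `u ∈ ℓ²(ℤ)` and `E` is an eigenvalue of `H_{α,θ,b}` with exponentially
decaying eigenfunction. -/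
theorem anderson_localization_decay (α lam b θ r : ℝ) (hα : α ∈ Set.Ioo (-1 : ℝ) 1)
    (hb : Irrational b) (hdio : DiophantineExp b r) (hres : NonResonant b r θ)
    (H : lp (fun _ : ℤ => ℂ) 2 →L[ℂ] lp (fun _ : ℤ => ℂ) 2)
    (hH : IsSchrodingerOp (potV α lam) b θ H)
    (E : ℝ) (hL : 0 < lyap (potV α lam) b (E : ℂ))
    (u : ℤ → ℝ) (hu : u ≠ 0)
    (heq : ∀ n : ℤ, u (n + 1) + u (n - 1) + potV α lam ((n : ℝ) * b + θ) * u n = E * u n)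
    (C δ : ℝ)
    (hgrow : ∀ n : ℤ, |u n| ≤ C * (1 + |(n : ℝ)|) ^ δ) :
    (∀ ε : ℝ, 0 < ε → ε < lyap (potV α lam) b (E : ℂ) / 3 →
      ∃ N : ℕ, ∀ n : ℤ, (N : ℝ) < |(n : ℝ)| →
        |u n| ≤ 2 * C * (2 * |(n : ℝ)| + 1) ^ δ *
          Real.exp (-((lyap (potV α lam) b (E : ℂ) - ε) / 5) * (|(n : ℝ)| - 1))) ∧
    Summable (fun n : ℤ => (u n) ^ 2) ∧
    ∃ ψ : lp (fun _ : ℤ => ℂ) 2, ψ ≠ 0 ∧ H ψ = (E : ℂ) • ψ := by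
  obtain ⟨hdecay, hsum, hψ⟩ := anderson_localization_decay_general hα hdio
    (hres.subexpNonResonant (by linarith [hdio.1])) hH hL hu heq
    (isSubexponential_of_abs_le_rpow hgrow)
  exact ⟨fun ε hε hεL => exists_nat_abs_le_rpow_mul_exp (by linarith) (by linarith) hu hgrow
    (hdecay (lyap (potV α lam) b E / 5) (by linarith)), hsum, hψ⟩
end

section
/- For every k ≥ 1 and every E ∈ ℝ there exist real coefficients b₀, …, b_k such that for every x ∈ ℝ, P_k(x,E) = (Σ_{j=0}^{k} b_j · cos(2π(x + (k−1)b/2))^j) / (∏_{j=0}^{k−1} (1 − αcos(2π(x+jb)))). -/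
open scoped Real

/-- The `k×k` tridiagonal matrix with diagonal entries `E - V(x+jb)`, `j = 0,…,k-1`, and
entries `-1` on the two adjacent diagonals. -/
noncomputable def Pmat (V : ℝ → ℝ) (b : ℝ) (k : ℕ) (x : ℝ) (E : ℝ) :
    Matrix (Fin k) (Fin k) ℝ :=
  fun i j =>
    if i = j then E - V (x + (i : ℝ) * b)
    else if (i : ℤ) = (j : ℤ) + 1 ∨ (j : ℤ) = (i : ℤ) + 1 then -1 else 0

/-- `P_k(x,E)`, the determinant of the box restriction `(H - E)|_{[0,k-1]}`. -/
noncomputable def Pdet (V : ℝ → ℝ) (b : ℝ) (k : ℕ) (x : ℝ) (E : ℝ) : ℝ :=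
  (Pmat V b k x E).det

/-!
The potential is a quotient `f / g` of even trigonometric polynomials of degree `d = 1`. Scaling row
`i` of the matrix by `g (x + i b)` clears the denominators, so `P_k(x, E) ∏ g (x + j b)` is a
`k × k` determinant of trigonometric polynomials of degree at most `d`, hence a trigonometric
polynomial of degree at most `k d`. Reversing the order of the sites shows that it is even about the
midpoint `x = -(k - 1) b / 2`, and an even trigonometric polynomial is a polynomial in the cosine.
-/

lemma prod_mem_submodule_pow_card {R A ι : Type*} [CommSemiring R] [CommSemiring A] [Algebra R A]
    {W : Submodule R A} (s : Finset ι) {a : ι → A} (ha : ∀ i ∈ s, a i ∈ W) :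
    ∏ i ∈ s, a i ∈ W ^ s.card := by
  classical
  induction s using Finset.induction_on with
  | empty => exact Submodule.one_le.1 le_rfl
  | insert i s his ih =>
    rw [Finset.prod_insert his, Finset.card_insert_of_notMem his, pow_succ']
    exact Submodule.mul_mem_mul (ha i (Finset.mem_insert_self i s))
      (ih fun j hj => ha j (Finset.mem_insert_of_mem hj))

lemma det_mem_submodule_pow_card {R A ι : Type*} [CommRing R] [CommRing A] [Algebra R A]
    [Fintype ι] [DecidableEq ι] {W : Submodule R A} {M : Matrix ι ι A} (hM : ∀ i j, M i j ∈ W) :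
    M.det ∈ W ^ Fintype.card ι := by
  rw [Matrix.det_apply]
  exact Submodule.sum_mem _ fun σ _ => Submodule.smul_of_tower_mem _ _
    (prod_mem_submodule_pow_card Finset.univ fun i _ => hM (σ i) i)

section TrigPoly

/-- The space of real trigonometric polynomials of period `1` and degree at most `n`. It is encoded
as the `n`-th power of the span of `1`, `cos (2πx)` and `sin (2πx)` in the algebra of functions, so
that products and translations are handled by the algebra of submodules. -/
noncomputable def trigPoly (n : ℕ) : Submodule ℝ (ℝ → ℝ) :=
  Submodule.span ℝ {1, fun x => Real.cos (2 * π * x), fun x => Real.sin (2 * π * x)} ^ n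

lemma mem_trigPoly_one {f : ℝ → ℝ} :
    f ∈ trigPoly 1 ↔ ∃ p q r : ℝ, ∀ x,
      f x = p + q * Real.cos (2 * π * x) + r * Real.sin (2 * π * x) := by
  simp [trigPoly, Submodule.mem_span_triple, funext_iff, eq_comm]

lemma const_mul_cos_mem_trigPoly_one (q : ℝ) :
    (fun x => q * Real.cos (2 * π * x)) ∈ trigPoly 1 :=
  mem_trigPoly_one.2 ⟨0, q, 0, fun x => by ring⟩

lemma one_sub_mul_cos_mem_trigPoly_one (q : ℝ) :
    (fun x => 1 - q * Real.cos (2 * π * x)) ∈ trigPoly 1 :=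
  mem_trigPoly_one.2 ⟨1, -q, 0, fun x => by ring⟩

lemma trigPoly_pow (d n : ℕ) : trigPoly d ^ n = trigPoly (n * d) := by
  rw [trigPoly, trigPoly, mul_comm n, pow_mul]

lemma trigPoly_one_pow (n : ℕ) : trigPoly 1 ^ n = trigPoly n := by
  rw [trigPoly_pow, mul_one]

lemma comp_add_right_mem_trigPoly {n : ℕ} {f : ℝ → ℝ} (hf : f ∈ trigPoly n) (s : ℝ) :
    (fun x => f (x + s)) ∈ trigPoly n := by
  let shift : (ℝ → ℝ) →ₐ[ℝ] (ℝ → ℝ) := AlgHom.pi fun x => Pi.evalAlgHom ℝ _ (x + s)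
  have shift_le : (trigPoly 1).map shift.toLinearMap ≤ trigPoly 1 := by
    rintro _ ⟨h, hh, rfl⟩
    obtain ⟨p, q, r, hpqr⟩ := mem_trigPoly_one.1 hh
    refine mem_trigPoly_one.2 ⟨p, q * Real.cos (2 * π * s) + r * Real.sin (2 * π * s),
      r * Real.cos (2 * π * s) - q * Real.sin (2 * π * s), fun x => ?_⟩
    change h (x + s) = _
    rw [hpqr, mul_add, Real.cos_add, Real.sin_add]
    ring
  rw [← trigPoly_one_pow] at hf ⊢
  have := Submodule.mem_map_of_mem (f := shift.toLinearMap) hf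
  rw [Submodule.map_pow] at this
  exact pow_le_pow_left' shift_le n this

open Polynomial in
lemma mul_mem_degreeLT {R : Type*} [Semiring R] {p q : R[X]} {m n : ℕ} (hp : p.natDegree ≤ m)
    (hq : q ∈ degreeLT R n) : p * q ∈ degreeLT R (m + n) := by
  rw [mem_degreeLT] at hq ⊢
  calc (p * q).degree ≤ p.degree + q.degree := degree_mul_le p q
    _ ≤ m + q.degree := by gcongr; exact natDegree_le_iff_degree_le.1 hp
    _ < m + n := WithBot.add_lt_add_left (WithBot.natCast_ne_bot m) hq
    _ = (m + n : ℕ) := by push_cast; rfl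

open Polynomial in
lemma exists_eval_cos_add_sin_mul_eval_cos_of_mem_trigPoly {n : ℕ} {f : ℝ → ℝ}
    (hf : f ∈ trigPoly n) :
    ∃ A ∈ degreeLT ℝ (n + 1), ∃ B ∈ degreeLT ℝ n, ∀ x,
      f x = A.eval (Real.cos (2 * π * x)) +
        Real.sin (2 * π * x) * B.eval (Real.cos (2 * π * x)) := by
  rw [← trigPoly_one_pow] at hf
  induction hf using Submodule.pow_induction_on_left' with
  | algebraMap r =>
    exact ⟨C r, mem_degreeLT.2 (by simpa using degree_C_lt), 0, zero_mem _, by simp⟩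
  | add f g n _ _ hf hg =>
    obtain ⟨A, hA, B, hB, hf⟩ := hf
    obtain ⟨A', hA', B', hB', hg⟩ := hg
    refine ⟨A + A', add_mem hA hA', B + B', add_mem hB hB', fun x => ?_⟩
    simp only [Pi.add_apply, hf, hg, eval_add]
    ring
  | mem_mul h hh n f _ hf =>
    obtain ⟨p, q, r, hpqr⟩ := mem_trigPoly_one.1 hh
    obtain ⟨A, hA, B, hB, hf⟩ := hf
    have linear_natDegree : (C p + C q * X).natDegree ≤ 1 := by compute_degree
    have quadratic_natDegree : (C r * (1 - X ^ 2)).natDegree ≤ 2 := by compute_degree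
    refine ⟨(C p + C q * X) * A + C r * (1 - X ^ 2) * B, add_mem ?_ ?_,
      (C p + C q * X) * B + C r * A, add_mem ?_ ?_, fun x => ?_⟩
    · simpa [add_comm, add_left_comm] using mul_mem_degreeLT linear_natDegree hA
    · simpa [add_comm, add_left_comm] using mul_mem_degreeLT quadratic_natDegree hB
    · simpa [add_comm] using mul_mem_degreeLT linear_natDegree hB
    · simpa using mul_mem_degreeLT (natDegree_C r).le hA
    · simp only [Pi.mul_apply, hpqr, hf, eval_add, eval_sub, eval_mul, eval_pow, eval_C, eval_X,
        eval_one]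
      linear_combination r * B.eval (Real.cos (2 * π * x)) * Real.sin_sq_add_cos_sq (2 * π * x)

open Polynomial in
lemma exists_eq_sum_cos_pow_of_mem_trigPoly_of_even {n : ℕ} {f : ℝ → ℝ} (hf : f ∈ trigPoly n)
    (hf_even : f.Even) :
    ∃ c : Fin (n + 1) → ℝ, ∀ x, f x = ∑ j, c j * Real.cos (2 * π * x) ^ (j : ℕ) := by
  obtain ⟨A, hA, B, -, hAB⟩ := exists_eval_cos_add_sin_mul_eval_cos_of_mem_trigPoly hf
  refine ⟨degreeLTEquiv ℝ (n + 1) ⟨A, hA⟩, fun x => ?_⟩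
  rw [← eval_eq_sum_degreeLTEquiv]
  have at_neg := hAB (-x)
  rw [hf_even, mul_neg, Real.cos_neg, Real.sin_neg] at at_neg
  linarith [hAB x]

end TrigPoly

section ClearedMatrix

/-- The restriction of `E - H₀` to `k` sites, where `H₀` is the free operator (zero potential). With
zero potential `Pmat` depends on neither the frequency nor the phase; both are set to `0`. -/
noncomputable def freePmat (k : ℕ) (E : ℝ) : Matrix (Fin k) (Fin k) ℝ :=
  Pmat 0 0 k 0 E

lemma Pmat_eq_freePmat_sub_diagonal (V : ℝ → ℝ) (b : ℝ) (k : ℕ) (x E : ℝ) :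
    Pmat V b k x E = freePmat k E - Matrix.diagonal fun i : Fin k => V (x + i * b) := by
  ext i j
  rcases eq_or_ne i j with rfl | hij
  · simp [Pmat, freePmat]
  · simp [Pmat, freePmat, hij]

lemma freePmat_rev_rev (k : ℕ) (E : ℝ) (i j : Fin k) :
    freePmat k E i.rev j.rev = freePmat k E i j := by
  have adjacent_rev : ((i.rev : ℤ) = j.rev + 1 ∨ (j.rev : ℤ) = i.rev + 1) ↔
      ((i : ℤ) = j + 1 ∨ (j : ℤ) = i + 1) := by
    simp only [Fin.val_rev]
    omega
  simp only [freePmat, Pmat, Fin.rev_inj, adjacent_rev, Pi.zero_apply]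

/-- The matrix of `E - f / g` on `k` sites with the denominators cleared: row `i` of
`Pmat (f / g) b k x E` is multiplied by `g (x + i * b)`. It involves no division, so it is
defined at the zeros of `g` as well. -/
noncomputable def clearedPmat (f g : ℝ → ℝ) (b : ℝ) (k : ℕ) (x E : ℝ) :
    Matrix (Fin k) (Fin k) ℝ :=
  Matrix.diagonal (fun i : Fin k => g (x + i * b)) * freePmat k E -
    Matrix.diagonal fun i : Fin k => f (x + i * b)

variable {f g : ℝ → ℝ}

lemma det_clearedPmat_eq_prod_mul_Pdet (b : ℝ) (k : ℕ) (x E : ℝ)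
    (hg : ∀ j ∈ Finset.range k, g (x + j * b) ≠ 0) :
    (clearedPmat f g b k x E).det =
      (∏ j ∈ Finset.range k, g (x + j * b)) * Pdet (f / g) b k x E := by
  have hg_fin (i : Fin k) : g (x + i * b) ≠ 0 := hg i (Finset.mem_range.2 i.isLt)
  have factor : clearedPmat f g b k x E =
      Matrix.diagonal (fun i : Fin k => g (x + i * b)) * Pmat (f / g) b k x E := by
    simp only [clearedPmat, Pmat_eq_freePmat_sub_diagonal (f / g), mul_sub,
      Matrix.diagonal_mul_diagonal, Pi.div_apply, mul_div_cancel₀ _ (hg_fin _)]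
  rw [factor, Matrix.det_mul, Matrix.det_diagonal, Finset.prod_range, Pdet]

lemma det_clearedPmat_reflect (hf : f.Even) (hg : g.Even) (b : ℝ) (k : ℕ) (x E : ℝ) :
    (clearedPmat f g b k (-x - (k - 1) * b) E).det = (clearedPmat f g b k x E).det := by
  have site_rev (i : Fin k) : -x - (k - 1) * b + i.rev * b = -(x + i * b) := by
    rw [Fin.val_rev, Nat.cast_sub (by omega)]
    push_cast
    ring
  rw [← Matrix.det_submatrix_equiv_self Fin.revPerm]
  congr 1
  ext i j
  simp only [clearedPmat, Matrix.submatrix_apply, Fin.revPerm_apply, Matrix.sub_apply,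
    Matrix.diagonal_mul, Matrix.diagonal_apply, Fin.rev_inj, site_rev, hf _, hg _,
    freePmat_rev_rev]

lemma det_clearedPmat_mem_trigPoly {d : ℕ} (hf : f ∈ trigPoly d) (hg : g ∈ trigPoly d) (b : ℝ)
    (k : ℕ) (E : ℝ) : (fun x => (clearedPmat f g b k x E).det) ∈ trigPoly (k * d) := by
  let M : Matrix (Fin k) (Fin k) (ℝ → ℝ) := Matrix.of fun i j x => clearedPmat f g b k x E i j
  have entry_mem (i j : Fin k) : M i j ∈ trigPoly d := by
    have row_mem := Submodule.smul_mem _ (freePmat k E i j) (comp_add_right_mem_trigPoly hg (i * b))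
    rcases eq_or_ne i j with rfl | hij
    · convert sub_mem row_mem (comp_add_right_mem_trigPoly hf (i * b)) using 1
      ext x
      simp [M, clearedPmat, mul_comm]
    · convert row_mem using 1
      ext x
      simp [M, clearedPmat, hij, mul_comm]
  have det_eq : (fun x => (clearedPmat f g b k x E).det) = M.det := by
    ext x
    exact ((Pi.evalRingHom (fun _ : ℝ => ℝ) x).map_det M).symm
  rw [det_eq, ← trigPoly_pow]
  simpa using det_mem_submodule_pow_card entry_mem

end ClearedMatrix

lemma one_sub_mul_cos_pos {α : ℝ} (hα : |α| < 1) (t : ℝ) : 0 < 1 - α * Real.cos t := by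
  have : |α * Real.cos t| < 1 := by
    rw [abs_mul]
    exact mul_lt_one_of_nonneg_of_lt_one_left (abs_nonneg α) hα (Real.abs_cos_le_one t)
  linarith [(abs_lt.1 this).2]

theorem Pdet_eq_poly_in_cos_general {d : ℕ} {f g : ℝ → ℝ} (hf : f ∈ trigPoly d)
    (hg : g ∈ trigPoly d) (hf_even : f.Even) (hg_even : g.Even) (b : ℝ) (k : ℕ) (E : ℝ) :
    ∃ c : Fin (k * d + 1) → ℝ, ∀ x : ℝ, (∀ j ∈ Finset.range k, g (x + j * b) ≠ 0) →
      Pdet (f / g) b k x E =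
        (∑ j, c j * Real.cos (2 * π * (x + ((k : ℝ) - 1) * b / 2)) ^ (j : ℕ)) /
          ∏ j ∈ Finset.range k, g (x + j * b) := by
  have centred_mem := comp_add_right_mem_trigPoly (det_clearedPmat_mem_trigPoly hf hg b k E)
    (-((k - 1) * b / 2))
  have centred_even : Function.Even fun y =>
      (clearedPmat f g b k (y + -((k - 1) * b / 2)) E).det := by
    intro y
    beta_reduce
    rw [← det_clearedPmat_reflect hf_even hg_even]
    ring_nf
  obtain ⟨c, hc⟩ := exists_eq_sum_cos_pow_of_mem_trigPoly_of_even centred_mem centred_even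
  refine ⟨c, fun x hx => ?_⟩
  rw [eq_div_iff (Finset.prod_ne_zero_iff.2 hx), mul_comm, ← hc, add_neg_cancel_right,
    det_clearedPmat_eq_prod_mul_Pdet b k x E hx]

/-- for every `k ≥ 1` and `E` there are coefficients `b₀,…,b_k` with
`P_k(x,E) = (Σ_{j=0}^k b_j cos(2π(x+(k-1)b/2))^j) / (∏_{j=0}^{k-1} (1-αcos(2π(x+jb))))`
for every `x`. -/
theorem Pdet_eq_poly_in_cos (α lam b : ℝ) (hα : α ∈ Set.Ioo (-1 : ℝ) 1)
    (hb : Irrational b) (k : ℕ) (hk : 1 ≤ k) (E : ℝ) :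
    ∃ c : Fin (k + 1) → ℝ, ∀ x : ℝ,
      Pdet (potV α lam) b k x E =
        (∑ j : Fin (k + 1),
            c j * (Real.cos (2 * Real.pi * (x + ((k : ℝ) - 1) * b / 2))) ^ (j : ℕ)) /
          (∏ j ∈ Finset.range k, (1 - α * Real.cos (2 * Real.pi * (x + (j : ℝ) * b)))) := by
  obtain ⟨c, hc⟩ := mul_one k ▸ Pdet_eq_poly_in_cos_general
    (const_mul_cos_mem_trigPoly_one (2 * lam)) (one_sub_mul_cos_mem_trigPoly_one α)
    (fun x => by simp) (fun x => by simp) b k E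
  exact ⟨c, fun x => hc x fun j _ => (one_sub_mul_cos_pos (abs_lt.2 hα) _).ne'⟩
end
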